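/- arXiv:2208.06846 — 2 statements merged into one kernel-verified Lean document; each statement's English description precedes it below -/
import Mathlib

section
/- Let m ≥ 3, and let C, D ⊆ ℕ satisfy C ∪ D = [0, m], C ∩ D = {r_1, r_2} with r_1 < r_2, 0 ∈ C, and r_1 even. If R_C(n) = R_D(n) for every nonnegative integer n, then there exists a positive integer l such that r_1 = 2^{2l+1} − 2, r_2 = 2^{2l+1} − 1, m = 2^{2l+2} − 3, C = A_{2l+1} ∪ (2^{2l+1} − 2 + B_{2l+1}), and D = B_{2l+1} ∪ (2^{2l+1} − 2 + A_{2l+1}). -/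
open Set

/-- R S n: number of pairs (s,s') with s,s' ∈ S, s < s', s+s' = n. -/
noncomputable def R (S : Set ℕ) (n : ℕ) : ℕ :=
  {p : ℕ × ℕ | p.1 ∈ S ∧ p.2 ∈ S ∧ p.1 < p.2 ∧ p.1 + p.2 = n}.ncard

/-- Thue–Morse set: nonnegative integers with an even number of binary 1's. -/
def A : Set ℕ := {n | Even ((Nat.digits 2 n).count 1)}

def B : Set ℕ := Aᶜ

def Al (k : ℕ) : Set ℕ := A ∩ Set.Icc 0 (2 ^ k - 1)

def Bl (k : ℕ) : Set ℕ := B ∩ Set.Icc 0 (2 ^ k - 1)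

open Polynomial in
lemma fold_coeff (n : ℕ) (f : ℤ[X]) (hd : f.natDegree < 2 * n) (h : (X ^ n + 1 : ℤ[X]) ∣ f)
    (i : ℕ) (hi : i < n) : f.coeff i = f.coeff (i + n) := by
  obtain ⟨q, rfl⟩ := h
  by_cases hq : q = 0
  · simp [hq]
  have hmon : (X ^ n + 1 : ℤ[X]).Monic := by
    simpa using monic_X_pow_add_C (1 : ℤ) (n := n) (by omega)
  have hdeg : (X ^ n + 1 : ℤ[X]).natDegree = n := by
    simpa using natDegree_X_pow_add_C (R := ℤ) (n := n) (r := 1)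
  have hqn : q.natDegree < n := by
    rw [hmon.natDegree_mul' hq, hdeg] at hd; omega
  have h1 : q.coeff (i + n) = 0 := coeff_eq_zero_of_natDegree_lt (by omega)
  rw [add_mul, one_mul, coeff_add, coeff_add, coeff_X_pow_mul, h1, coeff_X_pow_mul']
  simp [show ¬ n ≤ i by omega]

open Polynomial in
lemma psi_prime (i : ℕ) : Prime (X ^ (2 ^ i) + 1 : ℤ[X]) := by
  have h := cyclotomic_prime_pow_eq_geom_sum (R := ℤ) (n := i) Nat.prime_two
  have h2 := cyclotomic.irreducible (n := 2 ^ (i + 1)) (by positivity)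
  rw [h] at h2
  simp [Finset.sum_range_succ] at h2
  rw [add_comm]
  exact h2.prime

open Polynomial in
lemma step_dvd (p E S : ℤ[X]) (hp : Prime p) (hS : ¬ p ^ 2 ∣ S) (a : ℕ) (h : p ^ a ∣ E * S) :
    p ^ (a - 1) ∣ E := by
  by_cases hpS : p ∣ S
  · obtain ⟨Q, rfl⟩ := hpS
    have hQ : ¬ p ∣ Q := fun hQ => hS (by rw [pow_two]; exact mul_dvd_mul_left _ hQ)
    cases a with
    | zero => simp
    | succ b =>
      have : p * p ^ b ∣ p * (E * Q) := by
        convert h using 1 <;> ring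
      exact hp.pow_dvd_of_dvd_mul_right _ hQ ((mul_dvd_mul_iff_left hp.ne_zero).1 this)
  · exact (pow_dvd_pow _ (by omega)).trans (hp.pow_dvd_of_dvd_mul_right _ hpS h)

open Polynomial in
lemma prod_dvd (E : ℤ[X]) (k : ℕ) (h0 : (X - 1 : ℤ[X]) ∣ E)
    (h : ∀ i < k, (X ^ (2 ^ i) + 1 : ℤ[X]) ∣ E) : (X ^ (2 ^ k) - 1 : ℤ[X]) ∣ E := by
  induction k with
  | zero => simpa using h0
  | succ k ih =>
    obtain ⟨G, hG⟩ := ih (fun i hi => h i (by omega))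
    have h1 := h k (by omega)
    rw [hG] at h1
    rcases (psi_prime k).dvd_or_dvd h1 with h2 | h2
    · exfalso
      have h3 : (X ^ (2 ^ k) + 1 : ℤ[X]) ∣ C 2 := by
        have := dvd_sub (dvd_refl (X ^ (2 ^ k) + 1 : ℤ[X])) h2
        convert this using 1
        simp only [map_ofNat]; ring
      have := fold_coeff (2 ^ k) (C 2) (by simp) h3 0 (by positivity)
      rw [coeff_C, coeff_C] at this
      simp at this
    · obtain ⟨H, rfl⟩ := h2
      exact ⟨H, by rw [hG]; ring⟩

open Polynomial in
noncomputable def SS (m r1 r2 : ℕ) : ℤ[X] := ∑ i ∈ Finset.range (m+1), X ^ i + X ^ r1 + X ^ r2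

open Polynomial in
noncomputable def UU (m r1 r2 : ℕ) : ℤ[X] := X ^ r1 + X ^ r2 - X ^ (m + 1) - X ^ (m + 2)

open Polynomial in
lemma TT_eq (m r1 r2 : ℕ) :
    (1 - X) * SS m r1 r2 = 1 - X ^ (m + 3) + (1 - X) * UU m r1 r2 := by
  have h := mul_neg_geom_sum (X : ℤ[X]) (m + 1)
  unfold SS UU
  rw [mul_add, mul_add, h]
  ring

open Polynomial in
lemma no_dvd_top (m r1 r2 k : ℕ) (hk : m + 3 = 2 ^ (k + 1)) (h2 : r2 ≤ m) (h : r1 < r2) (hm : 3 ≤ m) :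
    ¬ (X ^ (2 ^ k) + 1 : ℤ[X]) ∣ SS m r1 r2 := by
  intro hd
  have hdeg : (SS m r1 r2).natDegree ≤ m := by
    unfold SS
    rw [natDegree_le_iff_coeff_eq_zero]
    intro N hN
    simp [coeff_X_pow]
    omega
  have hp : 2 ^ (k+1) = 2 * 2 ^ k := by ring
  have := fold_coeff (2 ^ k) _ (by omega) hd (2 ^ k - 1) (by omega)
  rw [coeff_eq_zero_of_natDegree_lt (n := _ + _) (by omega)] at this
  simp [SS, coeff_X_pow] at this
  split_ifs at this <;> omega

open Polynomial in
lemma UU_dvd (m r1 r2 k i : ℕ) (hi : i ≤ k) (hk : m + 3 = 2 ^ (k + 1))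
    (h : (X ^ (2 ^ i) + 1 : ℤ[X]) ∣ SS m r1 r2) : (X ^ (2 ^ i) + 1 : ℤ[X]) ∣ UU m r1 r2 := by
  have h1 := TT_eq m r1 r2
  have h2 : (X ^ (2 ^ i) + 1 : ℤ[X]) ∣ X ^ (m + 3) - 1 := by
    rw [hk]
    have : (X ^ (2 ^ (i + 1)) - 1 : ℤ[X]) ∣ X ^ (2 ^ (k + 1)) - 1 := by
      obtain ⟨d, rfl⟩ := Nat.exists_eq_add_of_le hi
      rw [show i + d + 1 = (i + 1) + d by ring, pow_add 2 (i+1) d, pow_mul]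
      exact sub_one_dvd_pow_sub_one _ _ 
    refine Dvd.dvd.trans ⟨X ^ (2 ^ i) - 1, ?_⟩ this
    ring
  have h3 : (X ^ (2 ^ i) + 1 : ℤ[X]) ∣ (1 - X) * UU m r1 r2 := by
    have := dvd_add (h.mul_left (1 - X)) h2
    convert this using 1
    rw [h1]; ring
  rcases (psi_prime i).dvd_or_dvd h3 with h4 | h4
  · exfalso
    by_cases hi0 : i = 0
    · subst hi0
      have := eval_dvd (x := (-1 : ℤ)) h4
      norm_num at this
    · have h2i : 2 ≤ 2 ^ i := by
        calc 2 = 2 ^ 1 := rfl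
          _ ≤ 2 ^ i := Nat.pow_le_pow_right (by norm_num) (by omega)
      have hd : (1 - X : ℤ[X]).natDegree ≤ 1 := by compute_degree
      have := fold_coeff (2 ^ i) (1 - X) (by omega) h4 0 (by positivity)
      rw [coeff_eq_zero_of_natDegree_lt (n := 0 + _) (by omega)] at this
      simp at this
  · exact h4

open Polynomial in
lemma sq_dvd_der (p f : ℤ[X]) (h : p ^ 2 ∣ f) : p ∣ derivative f := by
  obtain ⟨q, rfl⟩ := h
  rw [derivative_mul, pow_two, derivative_mul]
  exact ⟨(derivative p + derivative p) * q + p * derivative q, by ring⟩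

open Polynomial in
lemma modeq_dvd (n a b : ℕ) (h : a ≡ b [MOD 2 * n]) :
    (X ^ n + 1 : ℤ[X]) ∣ X ^ a - X ^ b := by
  have key : ∀ a : ℕ, (X ^ n + 1 : ℤ[X]) ∣ X ^ a - X ^ (a % (2 * n)) := by
    intro a
    have h1 : (X ^ (2 * n) - 1 : ℤ[X]) ∣ (X ^ (2 * n)) ^ (a / (2 * n)) - 1 :=
      sub_one_dvd_pow_sub_one _ _
    have h2 : (X ^ n + 1 : ℤ[X]) ∣ X ^ (2 * n) - 1 := ⟨X ^ n - 1, by ring⟩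
    have h3 := (h2.trans h1).mul_left (X ^ (a % (2 * n)))
    convert h3 using 1
    conv_lhs => rw [← Nat.mod_add_div a (2 * n)]
    rw [pow_add, pow_mul, Nat.add_mul_mod_self_left, Nat.mod_mod]
    ring
  have h1 := dvd_sub (key a) (key b)
  rw [show a % (2 * n) = b % (2 * n) from h] at h1
  convert h1 using 1
  ring

open Polynomial in
lemma X_mul_der (r : ℕ) : (X : ℤ[X]) * derivative (X ^ r) = (r : ℤ[X]) * X ^ r := by
  cases r with
  | zero => simp
  | succ r => 
    rw [derivative_X_pow]
    simp
    ring

open Polynomial in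
lemma der_TT (m r1 r2 : ℕ) :
    X * derivative ((1 - X) * SS m r1 r2) = - ((m + 3 : ℕ) : ℤ[X]) * X ^ (m + 3)
      - X * UU m r1 r2 + (1 - X) * ((r1 : ℤ[X]) * X ^ r1 + (r2 : ℤ[X]) * X ^ r2
       - ((m + 1 : ℕ) : ℤ[X]) * X ^ (m + 1) - ((m + 2 : ℕ) : ℤ[X]) * X ^ (m + 2)) := by
  rw [TT_eq, ← X_mul_der, ← X_mul_der, ← X_mul_der, ← X_mul_der, neg_mul, ← X_mul_der]
  simp only [UU, derivative_add, derivative_sub, derivative_mul, derivative_one, derivative_X]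
  ring

set_option maxHeartbeats 2000000 in
open Polynomial in
lemma no_sq (m r1 r2 k i : ℕ) (hi : i ≤ k) (hk : m + 3 = 2 ^ (k + 1)) (h2 : r2 ≤ m) (h : r1 < r2)
    (hev : Even r1) (hd : (X ^ (2 ^ i) + 1 : ℤ[X]) ^ 2 ∣ SS m r1 r2) :
    r2 = r1 + 1 ∧ r1 + r2 = m := by
  have hU := UU_dvd m r1 r2 k i hi hk ((dvd_pow_self _ two_ne_zero).trans hd)
  have hD : (X ^ (2 ^ i) + 1 : ℤ[X]) ∣ X * derivative ((1 - X) * SS m r1 r2) :=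
    (sq_dvd_der _ _ (hd.mul_left _)).mul_left _
  rw [der_TT] at hD
  have hdiv : 2 * 2 ^ i ∣ m + 3 := by
    rw [hk, ← pow_succ']; exact pow_dvd_pow _ (by omega)
  have hm_even : Even (m + 3) := by rw [hk, pow_succ]; simp
  by_cases hi0 : i = 0
  · exfalso
    subst hi0
    have e1 := eval_dvd (x := (-1 : ℤ)) hU
    have e2 := eval_dvd (x := (-1 : ℤ)) hD
    have hm1 : Even (m + 1) := by
      rw [Nat.even_iff] at *; omega
    have hm2 : Odd (m + 2) := by
      rw [Nat.even_iff] at *; rw [Nat.odd_iff]; omega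
    simp [UU, hev.neg_one_pow, hm1.neg_one_pow, hm2.neg_one_pow] at e1
    have hr2 : Odd r2 := by
      by_contra hr
      rw [Nat.not_odd_iff_even] at hr
      rw [hr.neg_one_pow] at e1
      norm_num at e1
    simp [UU, hev.neg_one_pow, hm1.neg_one_pow, hm2.neg_one_pow, hm_even.neg_one_pow,
      hr2.neg_one_pow] at e2
    omega
  · obtain ⟨n, hn⟩ : ∃ n, n = 2 ^ i := ⟨_, rfl⟩
    rw [← hn] at hU hD hdiv
    have hn2 : n = 2 ∨ 4 ≤ n := by
      obtain ⟨j, rfl⟩ := Nat.exists_eq_succ_of_ne_zero hi0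
      cases j with
      | zero => left; simpa using hn
      | succ j => right; rw [hn, Nat.succ_eq_add_one, pow_succ, pow_succ]; have := Nat.one_le_two_pow (n := j); omega
    have hn_even : n % 2 = 0 := by
      obtain ⟨j, rfl⟩ := Nat.exists_eq_succ_of_ne_zero hi0
      rw [hn, pow_succ]; simp
    have m3 : m + 3 ≡ 0 [MOD 2 * n] := (Nat.modEq_zero_iff_dvd).2 hdiv
    have m3' : m + 3 ≡ 2 * n [MOD 2 * n] := m3.trans (by simp [Nat.ModEq])
    have m1 : m + 1 ≡ 2 * n - 2 [MOD 2 * n] := by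
      apply Nat.ModEq.add_right_cancel' 2
      rw [show 2 * n - 2 + 2 = 2 * n by omega]; exact m3'
    have m2 : m + 2 ≡ 2 * n - 1 [MOD 2 * n] := by
      apply Nat.ModEq.add_right_cancel' 1
      rw [show 2 * n - 1 + 1 = 2 * n by omega]; exact m3'
    have q1 : r1 ≡ r1 % (2 * n) [MOD 2 * n] := (Nat.mod_modEq _ _).symm
    have q2 : r2 ≡ r2 % (2 * n) [MOD 2 * n] := (Nat.mod_modEq _ _).symm
    have hl1 := Nat.mod_lt r1 (show 0 < 2 * n by omega)
    have hl2 := Nat.mod_lt r2 (show 0 < 2 * n by omega)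
    have hpar : (r1 % (2 * n)) % 2 = 0 := by
      rw [Nat.mod_mul_right_mod]; exact Nat.even_iff.1 hev
    obtain ⟨s1, hs1⟩ : ∃ s, s = r1 % (2 * n) := ⟨_, rfl⟩
    obtain ⟨s2, hs2⟩ : ∃ s, s = r2 % (2 * n) := ⟨_, rfl⟩
    rw [← hs1] at q1 hl1 hpar
    rw [← hs2] at q2 hl2
    have hU' : (X ^ n + 1 : ℤ[X]) ∣ X ^ s1 + X ^ s2 - X ^ (2 * n - 2) - X ^ (2 * n - 1) := by
      have := dvd_sub hU (dvd_sub (dvd_sub (dvd_add (modeq_dvd n _ _ q1) (modeq_dvd n _ _ q2))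
        (modeq_dvd n _ _ m1)) (modeq_dvd n _ _ m2))
      convert this using 1
      unfold UU; ring
    have hdeg : (X ^ s1 + X ^ s2 - X ^ (2 * n - 2) - X ^ (2 * n - 1) : ℤ[X]).natDegree ≤ 2 * n - 1 := by
      rw [natDegree_le_iff_coeff_eq_zero]
      intro N hN
      simp only [coeff_sub, coeff_add, coeff_X_pow]
      rw [if_neg (by omega), if_neg (by omega), if_neg (by omega), if_neg (by omega)]; simp
    have c1 := fold_coeff n _ (by omega) hU' (n - 2) (by omega)
    have c2 := fold_coeff n _ (by omega) hU' (n - 1) (by omega)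
    simp only [coeff_sub, coeff_add, coeff_X_pow] at c1 c2
    have hs : s1 = 2 * n - 2 ∧ s2 = 2 * n - 1 := by
      rw [show n - 2 + n = 2 * n - 2 by omega] at c1
      rw [show n - 1 + n = 2 * n - 1 by omega] at c2
      have z1 : s1 = 2 * n - 2 ∨ s2 = 2 * n - 2 := by
        by_contra hc
        rw [not_or] at hc
        rw [if_neg (show ¬ 2 * n - 2 = s1 by omega), if_neg (show ¬ 2 * n - 2 = s2 by omega),
          if_neg (show ¬ 2 * n - 2 = 2 * n - 1 by omega), if_neg (show ¬ n - 2 = 2 * n - 1 by omega),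
          if_neg (show ¬ n - 2 = 2 * n - 2 by omega), if_pos rfl] at c1
        clear c2
        split_ifs at c1 <;> simp at c1
      have z2 : s1 = 2 * n - 1 ∨ s2 = 2 * n - 1 := by
        by_contra hc
        rw [not_or] at hc
        rw [if_neg (show ¬ 2 * n - 1 = s1 by omega), if_neg (show ¬ 2 * n - 1 = s2 by omega),
          if_neg (show ¬ 2 * n - 1 = 2 * n - 2 by omega), if_neg (show ¬ n - 1 = 2 * n - 1 by omega),
          if_neg (show ¬ n - 1 = 2 * n - 2 by omega), if_pos rfl] at c2
        clear c1
        split_ifs at c2 <;> simp at c2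
      clear c1 c2
      omega
    have t1 : r1 + 2 ≡ 0 [MOD 2 * n] := by
      have := q1.add_right 2
      rw [hs.1, show 2 * n - 2 + 2 = 2 * n by omega] at this
      exact this.trans (by simp [Nat.ModEq])
    have t2 : r2 + 2 ≡ 1 [MOD 2 * n] := by
      have := q2.add_right 2
      rw [hs.2, show 2 * n - 1 + 2 = 1 + 2 * n by omega] at this
      exact this.trans (by simp [Nat.ModEq])
    have d1 := modeq_dvd n _ _ t1
    have d2 := modeq_dvd n _ _ t2
    have d3 := modeq_dvd n _ _ m3
    have d4 := modeq_dvd n _ _ (m3.add_right 1)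
    have d5 := modeq_dvd n _ _ (m3.add_right 2)
    have hF : (X ^ n + 1 : ℤ[X]) ∣ C ((r1 : ℤ) - m - 1) + C ((r2 : ℤ) - r1 - 1) * X
        + C ((m : ℤ) + 2 - r2 - (m + 3)) * X ^ 2 := by
      have := dvd_add (hD.mul_left (X ^ 2)) (dvd_add (hU.mul_left (X ^ 3)) (dvd_add
        (d5.mul_left ((m + 3 : ℕ) : ℤ[X])) (((((d1.mul_left (r1 : ℤ[X])).add
        (d2.mul_left (r2 : ℤ[X]))).sub (d3.mul_left ((m + 1 : ℕ) : ℤ[X]))).sub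
        (d4.mul_left ((m + 2 : ℕ) : ℤ[X]))).mul_left (-(1 - X)))))
      convert this using 1
      simp only [map_sub, map_add, map_natCast, map_one, map_ofNat]
      push_cast
      ring
    have hFd : (C ((r1 : ℤ) - m - 1) + C ((r2 : ℤ) - r1 - 1) * X
        + C ((m : ℤ) + 2 - r2 - (m + 3)) * X ^ 2 : ℤ[X]).natDegree ≤ 2 := by
      compute_degree
    have g0 := fold_coeff n _ (by omega) hF 0 (by omega)
    have g1 := fold_coeff n _ (by omega) hF 1 (by omega)
    simp only [coeff_add, coeff_C_mul, coeff_C, coeff_X, coeff_X_pow] at g0 g1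
    rcases hn2 with rfl | hn4
    · norm_num at g0 g1
      omega
    · exfalso
      rw [if_pos trivial, if_neg (by omega), if_neg (by omega), if_neg (by omega), if_neg (by omega),
        if_neg (by omega)] at g0
      omega

open Polynomial in
lemma key (m r1 r2 : ℕ) (E : ℤ[X]) (hE : E ≠ 0) (hdE : E.natDegree ≤ m) (hm : 3 ≤ m)
    (h2 : r2 ≤ m) (h : r1 < r2) (hev : Even r1) (hES : E * SS m r1 r2 = expand ℤ 2 E) :
    ∃ k : ℕ, m + 3 = 2 ^ (k + 1) ∧ r2 = r1 + 1 ∧ r1 + r2 = m := by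
  obtain ⟨F, hF, hF1⟩ := exists_eq_pow_rootMultiplicity_mul_and_not_dvd E hE 1
  obtain ⟨K, hK⟩ : ∃ K, K = rootMultiplicity 1 E := ⟨_, rfl⟩
  rw [← hK] at hF
  rw [map_one] at hF hF1
  have hX1 : (X - 1 : ℤ[X]) ≠ 0 := by simpa using X_sub_C_ne_zero (1 : ℤ)
  have hFe : F.eval 1 ≠ 0 := by
    intro h0
    exact hF1 (by simpa using dvd_iff_isRoot.2 h0)
  have hFS : F * SS m r1 r2 = (X + 1) ^ K * expand ℤ 2 F := by
    apply mul_left_cancel₀ (pow_ne_zero K hX1)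
    rw [← mul_assoc, ← hF, hES]
    conv_lhs => rw [hF]
    simp only [map_mul, map_pow, map_sub, map_one, expand_X]
    rw [← mul_assoc, ← mul_pow]
    ring
  have hmK : m + 3 = 2 ^ K := by
    have := congrArg (eval 1) hFS
    rw [eval_mul, eval_mul, expand_eval, one_pow, mul_comm] at this
    have := mul_right_cancel₀ hFe this
    simp [SS, eval_finsetSum] at this
    zify; linarith
  obtain ⟨k, rfl⟩ : ∃ k, K = k + 1 := by
    cases K with
    | zero => simp at hmK
    | succ k => exact ⟨k, rfl⟩
  refine ⟨k, hmK, ?_⟩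
  by_contra hcon
  have hns : ∀ i ≤ k, ¬ (X ^ (2 ^ i) + 1 : ℤ[X]) ^ 2 ∣ SS m r1 r2 := fun i hi hd =>
    hcon (no_sq m r1 r2 k i hi hmK h2 h hev hd)
  have htop := no_dvd_top m r1 r2 k hmK h2 h hm
  have step : ∀ i ≤ k, (X ^ (2 ^ i) + 1 : ℤ[X]) ^ (k + 1 - i) ∣ E * SS m r1 r2 →
      (X ^ (2 ^ i) + 1 : ℤ[X]) ^ (k - i) ∣ E ∧ (X ^ (2 ^ i) + 1 : ℤ[X]) ∣ E := by
    intro i hi hd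
    have h1 := step_dvd _ _ _ (psi_prime i) (hns i hi) _ hd
    rw [show k + 1 - i - 1 = k - i by omega] at h1
    refine ⟨h1, ?_⟩
    rcases hi.lt_or_eq with hlt | rfl
    · exact (dvd_pow_self _ (by omega)).trans h1
    · rw [show i + 1 - i = 1 by omega, pow_one] at hd
      exact ((psi_prime i).dvd_or_dvd hd).resolve_right htop
  have all : ∀ i ≤ k, (X ^ (2 ^ i) + 1 : ℤ[X]) ^ (k - i) ∣ E ∧ (X ^ (2 ^ i) + 1 : ℤ[X]) ∣ E := by
    intro i
    induction i with
    | zero =>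
      intro hi
      apply step 0 hi
      rw [hF, mul_assoc, hFS]
      exact ⟨(X - 1) ^ (k + 1) * expand ℤ 2 F, by simp; ring⟩
    | succ i ih =>
      intro hi
      apply step _ hi
      obtain ⟨G, hG⟩ := (ih (by omega)).1
      rw [hES, hG]
      simp only [map_mul, map_pow, map_add, map_one, expand_X]
      rw [show k + 1 - (i + 1) = k - i by omega, ← pow_mul, ← pow_succ']
      exact dvd_mul_right _ _
  have hbig := prod_dvd E (k + 1) (by rw [hF, pow_succ]; exact ⟨(X-1)^k * F, by ring⟩)
    (fun i hi => (all i (by omega)).2)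
  have := natDegree_le_of_dvd hbig hE
  have hd : (X ^ (2 ^ (k + 1)) - 1 : ℤ[X]).natDegree = 2 ^ (k + 1) := by
    simpa using natDegree_X_pow_sub_C (R := ℤ) (n := 2 ^ (k + 1)) (r := 1)
  omega

lemma A_two_mul (n : ℕ) : 2 * n ∈ A ↔ n ∈ A := by
  rcases Nat.eq_zero_or_pos n with rfl | h
  · simp
  · simp only [A, mem_ofPred_eq]
    rw [Nat.digits_def' (by norm_num) (by omega)]
    simp

lemma A_two_mul_add (n : ℕ) : 2 * n + 1 ∈ A ↔ n ∉ A := by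
  simp only [A, mem_ofPred_eq]
  rw [Nat.digits_def' (by norm_num) (by omega)]
  rw [show (2 * n + 1) % 2 = 1 by omega, show (2 * n + 1) / 2 = n by omega]
  simp [Nat.even_add_one]

lemma A_zero : 0 ∈ A := by simp [A]

lemma A_pow (k : ℕ) : 2 ^ k - 1 ∈ A ↔ Even k := by
  induction k with
  | zero => simp [A_zero]
  | succ k ih =>
    have := Nat.one_le_two_pow (n := k)
    rw [show 2 ^ (k + 1) - 1 = 2 * (2 ^ k - 1) + 1 by rw [pow_succ]; omega, A_two_mul_add, ih,
      Nat.even_add_one]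

open Classical in
noncomputable def tau (n : ℕ) : ℤ := if n ∈ A then 1 else -1

open Polynomial in
noncomputable def PP (K : ℕ) : ℤ[X] := ∏ j ∈ Finset.range K, (1 - X ^ (2 ^ j))

open Polynomial in
lemma PP_succ (K : ℕ) : PP (K + 1) = (1 - X) * expand ℤ 2 (PP K) := by
  unfold PP
  rw [Finset.prod_range_succ', map_prod, mul_comm]
  simp [← pow_mul, ← pow_succ']

open Polynomial in
lemma PP_coeff (K n : ℕ) : (PP K).coeff n = if n < 2 ^ K then tau n else 0 := by
  induction K generalizing n with
  | zero =>
    simp only [PP, Finset.range_zero, Finset.prod_empty, coeff_one]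
    by_cases h : n = 0
    · subst h; simp [tau, A_zero]
    · rw [if_neg h, if_neg (by simp; omega)]
  | succ K ih =>
    rw [PP_succ, sub_mul, one_mul, coeff_sub]
    have hp : 2 ^ (K + 1) = 2 * 2 ^ K := by ring
    rcases Nat.even_or_odd' n with ⟨i, rfl | rfl⟩
    · have h0 : (X * expand ℤ 2 (PP K)).coeff (2 * i) = 0 := by
        cases i with
        | zero => simp
        | succ i =>
          rw [show 2 * (i + 1) = (2 * i + 1) + 1 by ring, coeff_X_mul, coeff_expand (by norm_num),
            if_neg (by omega)]
      rw [h0, coeff_expand_mul' (by norm_num), ih, hp]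
      have ht : tau (2 * i) = tau i := by
        by_cases hA : i ∈ A <;> simp [tau, A_two_mul, hA]
      simp [ht]
    · rw [coeff_X_mul, coeff_expand_mul' (by norm_num), coeff_expand (by norm_num),
        if_neg (by omega), ih, hp]
      by_cases h : i < 2 ^ K
      · rw [if_pos h, if_pos (by omega)]
        by_cases hA : i ∈ A <;> simp [tau, A_two_mul_add, hA]
      · rw [if_neg h, if_neg (by omega)]; simp

open Polynomial in
lemma uniq (Δ S : ℤ[X]) (h : Δ * S = expand ℤ 2 Δ) (h0 : Δ.coeff 0 = 0) (hS : S.coeff 0 = 1) :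
    Δ = 0 := by
  ext n
  induction n using Nat.strong_induction_on with
  | _ n ih =>
    rcases Nat.eq_zero_or_pos n with rfl | hn
    · simpa using h0
    have h1 := congrArg (fun f => coeff f n) h
    simp only [coeff_mul] at h1
    rw [Finset.sum_eq_single (n, 0)] at h1
    · rw [hS, mul_one, coeff_expand (by norm_num)] at h1
      rw [h1]
      split_ifs
      · exact ih _ (by omega)
      · simp
    · rintro ⟨a, b⟩ hab hne
      rw [Finset.HasAntidiagonal.mem_antidiagonal] at hab
      have hlt : a < n := by
        by_contra hc
        exact hne (by ext <;> simp at * <;> omega)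
      simp [ih a hlt]
    · simp

open Polynomial in
lemma E_eq (m r1 r2 k : ℕ) (E : ℤ[X]) (hk : r1 + 2 = 2 ^ k) (h2 : r2 = r1 + 1) (h1 : r1 + r2 = m)
    (hr : 0 < r1) (hES : E * SS m r1 r2 = expand ℤ 2 E) (h0 : E.coeff 0 = 1) :
    E = (1 - X ^ r1) * PP k := by
  have hX1 : (1 - X : ℤ[X]) ≠ 0 := by
    rw [← neg_sub, neg_ne_zero]; simpa using X_sub_C_ne_zero (1 : ℤ)
  have hP : PP (k + 1) = PP k * (1 - X ^ (2 ^ k)) := by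
    unfold PP; rw [Finset.prod_range_succ]
  have hE0 : ((1 - X ^ r1) * PP k) * SS m r1 r2 = expand ℤ 2 ((1 - X ^ r1) * PP k) := by
    apply mul_left_cancel₀ hX1
    have hT := TT_eq m r1 r2
    have h3 : (1 - X) * SS m r1 r2 = (1 + X ^ r1) * (1 - X ^ (2 ^ k)) := by
      rw [hT, UU, ← hk, ← h1, h2]; ring
    calc _ = (1 - X ^ r1) * PP k * ((1 - X) * SS m r1 r2) := by ring
      _ = (1 - X ^ r1) * (1 + X ^ r1) * (PP k * (1 - X ^ (2 ^ k))) := by rw [h3]; ring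
      _ = _ := by
        rw [← hP, PP_succ]
        simp only [map_mul, map_sub, map_one, map_pow, expand_X]
        ring
  rw [← sub_eq_zero]
  apply uniq _ (SS m r1 r2)
  · rw [sub_mul, hES, hE0, map_sub]
  · rw [coeff_sub, h0, mul_coeff_zero, PP_coeff]
    simp [tau, A_zero, coeff_X_pow, hr.ne]
  · simp [SS, coeff_X_pow]; omega

open Classical Polynomial in
noncomputable def pol (m : ℕ) (S : Set ℕ) : ℤ[X] :=
  ∑ i ∈ Finset.range (m + 1), if i ∈ S then X ^ i else 0

open Classical Polynomial in
lemma pol_coeff (m : ℕ) (S : Set ℕ) (hS : S ⊆ Icc 0 m) (n : ℕ) :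
    (pol m S).coeff n = if n ∈ S then 1 else 0 := by
  unfold pol
  rw [finsetSum_coeff]
  have : ∀ i, (if i ∈ S then (X : ℤ[X]) ^ i else 0).coeff n = if n = i then (if n ∈ S then 1 else 0) else 0 := by
    intro i
    by_cases h : n = i
    · subst h; by_cases h' : n ∈ S <;> simp [h']
    · by_cases h' : i ∈ S <;> simp [h', h, coeff_X_pow]
  simp only [this]
  rw [Finset.sum_ite_eq]
  by_cases h : n ∈ S
  · have := hS h
    rw [if_pos]
    simp at this ⊢; omega
  · simp [h]

open Classical Polynomial in
lemma pol_sq (m : ℕ) (S : Set ℕ) (hS : S ⊆ Icc 0 m) (n : ℕ) :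
    (pol m S * pol m S).coeff n = 2 * (R S n : ℤ) + (expand ℤ 2 (pol m S)).coeff n := by
  rw [coeff_mul]
  simp only [pol_coeff m S hS]
  let f : ℕ × ℕ → ℤ := fun p => if p.1 ∈ S ∧ p.2 ∈ S ∧ p.1 < p.2 then 1 else 0
  let g : ℕ × ℕ → ℤ := fun p => if p.1 ∈ S ∧ p.1 = p.2 then 1 else 0
  have hsplit : ∀ p : ℕ × ℕ, ((if p.1 ∈ S then 1 else 0) * (if p.2 ∈ S then 1 else 0) : ℤ)
      = f p + f p.swap + g p := by
    rintro ⟨a, b⟩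
    simp only [f, g, Prod.swap]
    rcases lt_trichotomy a b with h | h | h
    · have h1 := h.ne
      have h2 := h.not_gt
      by_cases ha : a ∈ S <;> by_cases hb : b ∈ S <;> simp [ha, hb, h, h1, h2]
    · subst h
      by_cases ha : a ∈ S <;> simp [ha]
    · have h1 := h.ne'
      have h2 := h.not_gt
      by_cases ha : a ∈ S <;> by_cases hb : b ∈ S <;> simp [ha, hb, h, h1, h2]
  have hf : ∑ p ∈ Finset.HasAntidiagonal.antidiagonal n, f p = (R S n : ℤ) := by
    simp only [f]
    rw [Finset.sum_boole]
    congr 1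
    unfold R
    rw [← Set.ncard_coe_finset]
    congr 1
    ext ⟨a, b⟩
    simp
    tauto
  have hf2 : ∑ p ∈ Finset.HasAntidiagonal.antidiagonal n, f p.swap = (R S n : ℤ) := by
    rw [← hf]
    exact Finset.Nat.sum_antidiagonal_swap (f := f)
  have hg : ∑ p ∈ Finset.HasAntidiagonal.antidiagonal n, g p = (expand ℤ 2 (pol m S)).coeff n := by
    rw [coeff_expand (by norm_num), pol_coeff m S hS]
    split_ifs with h1 h2
    · rw [Finset.sum_eq_single (n / 2, n / 2)]
      · simp [g, h2]
      · rintro ⟨a, b⟩ hab hne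
        rw [Finset.HasAntidiagonal.mem_antidiagonal] at hab
        simp only [g]
        rw [if_neg]
        rintro ⟨-, h⟩
        exact hne (by ext <;> simp at * <;> omega)
      · intro h; exfalso; apply h; rw [Finset.HasAntidiagonal.mem_antidiagonal]; simp; omega
    · apply Finset.sum_eq_zero
      rintro ⟨a, b⟩ hab
      rw [Finset.HasAntidiagonal.mem_antidiagonal] at hab
      simp only [g]
      rw [if_neg]
      rintro ⟨h, h'⟩
      apply h2
      convert h using 1
      simp at *; omega
    · apply Finset.sum_eq_zero
      rintro ⟨a, b⟩ hab
      rw [Finset.HasAntidiagonal.mem_antidiagonal] at hab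
      simp only [g]
      rw [if_neg]
      rintro ⟨h, h'⟩
      simp at *; omega
  rw [Finset.sum_congr rfl (fun p _ => hsplit p), Finset.sum_add_distrib, Finset.sum_add_distrib,
    hf, hf2, hg]
  ring

set_option maxHeartbeats 1000000 in
theorem stmt8 (m r1 r2 : ℕ) (hm : 3 ≤ m) (C D : Set ℕ)
    (h1 : C ∪ D = Set.Icc 0 m) (h2 : C ∩ D = {r1, r2}) (h3 : r1 < r2)
    (h4 : (0 : ℕ) ∈ C) (h5 : Even r1)
    (h6 : ∀ n : ℕ, R C n = R D n) :
    ∃ l : ℕ, 0 < l ∧ r1 = 2 ^ (2 * l + 1) - 2 ∧ r2 = 2 ^ (2 * l + 1) - 1 ∧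
      m = 2 ^ (2 * l + 2) - 3 ∧
      C = Al (2 * l + 1) ∪ ((fun x => 2 ^ (2 * l + 1) - 2 + x) '' Bl (2 * l + 1)) ∧
      D = Bl (2 * l + 1) ∪ ((fun x => 2 ^ (2 * l + 1) - 2 + x) '' Al (2 * l + 1)) := by
  classical
  have hC : C ⊆ Icc 0 m := h1 ▸ subset_union_left
  have hD : D ⊆ Icc 0 m := h1 ▸ subset_union_right
  have hor : ∀ n, (n ∈ C ∨ n ∈ D) ↔ n ≤ m := by
    intro n
    have : n ∈ C ∪ D ↔ n ∈ Icc 0 m := by rw [h1]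
    simpa using this
  have hand : ∀ n, (n ∈ C ∧ n ∈ D) ↔ (n = r1 ∨ n = r2) := by
    intro n
    have : n ∈ C ∩ D ↔ n ∈ ({r1, r2} : Set ℕ) := by rw [h2]
    simpa using this
  have hr2 : r2 ≤ m := (hor r2).1 (Or.inl ((hand r2).2 (Or.inr rfl)).1)
  have hSS : pol m C + pol m D = SS m r1 r2 := by
    ext n
    rw [Polynomial.coeff_add, pol_coeff m C hC, pol_coeff m D hD]
    simp only [SS, Polynomial.coeff_add, Polynomial.finsetSum_coeff, Polynomial.coeff_X_pow]
    rw [Finset.sum_ite_eq]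
    simp only [Finset.mem_range, Nat.lt_succ_iff]
    have a1 := hor n
    have a2 := hand n
    by_cases c1 : n ∈ C <;> by_cases c2 : n ∈ D <;> simp only [c1, c2] at a1 a2 ⊢ <;>
      split_ifs <;> simp <;> simp at a1 a2 <;> omega
  obtain ⟨E, hEdef⟩ : ∃ E, E = pol m C - pol m D := ⟨_, rfl⟩
  have hEc : ∀ n, E.coeff n = (if n ∈ C then 1 else 0) - (if n ∈ D then 1 else 0) := by
    intro n
    rw [hEdef, Polynomial.coeff_sub, pol_coeff m C hC, pol_coeff m D hD]
  have hES : E * SS m r1 r2 = Polynomial.expand ℤ 2 E := by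
    rw [← hSS, hEdef, map_sub]
    have : (pol m C - pol m D) * (pol m C + pol m D) = pol m C * pol m C - pol m D * pol m D := by
      ring
    rw [this]
    ext n
    rw [Polynomial.coeff_sub, Polynomial.coeff_sub, pol_sq m C hC, pol_sq m D hD, h6]
    ring
  have hne : ∀ n ≤ m, n ≠ r1 → n ≠ r2 → E.coeff n ≠ 0 := by
    intro n hn hn1 hn2
    rw [hEc]
    have a1 := hor n
    have a2 := hand n
    by_cases c1 : n ∈ C <;> by_cases c2 : n ∈ D <;> simp_all
  have hE0 : E ≠ 0 := by
    intro h
    have q : ∃ n ≤ 2, n ≠ r1 ∧ n ≠ r2 := by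
      by_cases a : 0 ≠ r1 ∧ 0 ≠ r2
      · exact ⟨0, by norm_num, a⟩
      by_cases b : 1 ≠ r1 ∧ 1 ≠ r2
      · exact ⟨1, by norm_num, b⟩
      exact ⟨2, by norm_num, by omega⟩
    obtain ⟨n, hn, ha, hb⟩ := q
    exact hne n (by omega) ha hb (by simp [h])
  have hdE : E.natDegree ≤ m := by
    rw [Polynomial.natDegree_le_iff_coeff_eq_zero]
    intro N hN
    have := hor N
    rw [hEc]
    have c1 : N ∉ C := fun h => by have := this.1 (Or.inl h); omega
    have c2 : N ∉ D := fun h => by have := this.1 (Or.inr h); omega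
    simp [c1, c2]
  obtain ⟨k, hk, hr, hrm⟩ := key m r1 r2 E hE0 hdE hm hr2 h3 h5 hES
  have hk2 : r1 + 2 = 2 ^ k := by rw [pow_succ] at hk; omega
  have hr0 : 0 < r1 := by omega
  have h0D : 0 ∉ D := by
    intro h
    have := (hand 0).1 ⟨h4, h⟩
    omega
  have hEq := E_eq m r1 r2 k E hk2 hr hrm hr0 hES (by rw [hEc]; simp [h4, h0D])
  have hcf : ∀ n, (if n ∈ C then 1 else 0) - (if n ∈ D then 1 else 0) =
      (if n < 2 ^ k then tau n else 0) -
        (if r1 ≤ n then (if n - r1 < 2 ^ k then tau (n - r1) else 0) else 0) := by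
    intro n
    rw [← hEc, hEq, sub_mul, one_mul, Polynomial.coeff_sub, Polynomial.coeff_X_pow_mul',
      PP_coeff, PP_coeff]
  have hr1A : r1 ∈ A := by
    have := hcf r1
    have b := (hand r1).2 (Or.inl rfl)
    rw [if_pos b.1, if_pos b.2, if_pos (by omega), if_pos le_rfl, if_pos (by simp)] at this
    by_contra hc
    simp [tau, A_zero, hc] at this
  obtain ⟨j, rfl⟩ : ∃ j, k = j + 1 := by
    cases k with
    | zero => simp at hk2
    | succ j => exact ⟨j, rfl⟩
  have hj : Even j := by
    rw [← A_pow, ← A_two_mul]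
    convert hr1A using 1
    rw [pow_succ] at hk2; omega
  have hr2A : r2 ∉ A := by
    rw [show r2 = 2 ^ (j + 1) - 1 by omega, A_pow, Nat.even_add_one]
    exact fun h => h hj
  obtain ⟨l, rfl⟩ : ∃ l, j = 2 * l := hj.two_dvd
  have h1A : 1 ∉ A := by
    have := A_two_mul_add 0
    simp only [A_zero] at this
    simpa using this
  have hl : 0 < l := by
    rcases Nat.eq_zero_or_pos l with rfl | h
    · simp at hk2; omega
    · exact h
  have hshift : ∀ (T : Set ℕ) (n : ℕ), n ∈ ((fun x => 2 ^ (2 * l + 1) - 2 + x) ''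
      (T ∩ Icc 0 (2 ^ (2 * l + 1) - 1))) ↔ (r1 ≤ n ∧ n - r1 ∈ T ∧ n ≤ m) := by
    intro T n
    rw [show 2 ^ (2 * l + 1) - 2 = r1 by omega, show 2 ^ (2 * l + 1) - 1 = r1 + 1 by omega]
    constructor
    · rintro ⟨x, ⟨hx, hx2⟩, rfl⟩
      simp at hx2
      refine ⟨by simp, by simpa using hx, by simp; omega⟩
    · rintro ⟨a, b, c⟩
      exact ⟨n - r1, ⟨b, by simp; omega⟩, by simp; omega⟩
  have hmain : ∀ n, (n ∈ C ↔ (n ∈ A ∧ n ≤ r2) ∨ (r1 ≤ n ∧ n - r1 ∉ A ∧ n ≤ m)) ∧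
      (n ∈ D ↔ (n ∉ A ∧ n ≤ r2) ∨ (r1 ≤ n ∧ n - r1 ∈ A ∧ n ≤ m)) := by
    intro n
    have a1 := hor n
    have a2 := hand n
    have a3 := hcf n
    by_cases e1 : n = r1
    · subst e1
      have := a2.2 (Or.inl rfl)
      simp [this, hr1A, A_zero]; omega
    by_cases e2 : n = r2
    · have := a2.2 (Or.inr e2)
      have h' : n - r1 = 1 := by omega
      simp [this, h', h1A]
      rw [e2]; simp [hr2A]; omega
    by_cases e3 : n ≤ m
    · by_cases e4 : n < r1
      · rw [if_pos (show n < 2 ^ (2 * l + 1) by omega), if_neg (show ¬ r1 ≤ n by omega)] at a3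
        have f1 : ¬ r1 ≤ n := by omega
        have f2 : n ≤ r2 := by omega
        clear hcf hEc hES hEq hne hor hand hEdef
        by_cases c1 : n ∈ C <;> by_cases c2 : n ∈ D <;> by_cases c3 : n ∈ A <;>
          simp [c1, c2, c3, f1, f2, e1, e2, e3, tau] at a1 a2 a3 ⊢
      · rw [if_neg (show ¬ n < 2 ^ (2 * l + 1) by omega), if_pos (show r1 ≤ n by omega),
          if_pos (show n - r1 < 2 ^ (2 * l + 1) by omega)] at a3
        have f1 : r1 ≤ n := by omega
        have f2 : ¬ n ≤ r2 := by omega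
        clear hcf hEc hES hEq hne hor hand hEdef
        by_cases c1 : n ∈ C <;> by_cases c2 : n ∈ D <;> by_cases c3 : n - r1 ∈ A <;>
          simp [c1, c2, c3, f1, f2, e1, e2, e3, tau] at a1 a2 a3 ⊢
    · have f2 : ¬ n ≤ r2 := by omega
      simp only [e3, f2]
      have c1 : n ∉ C := fun h => e3 (a1.1 (Or.inl h))
      have c2 : n ∉ D := fun h => e3 (a1.1 (Or.inr h))
      simp [c1, c2]
  have hk' : m + 3 = 2 ^ (2 * l + 2) := hk
  refine ⟨l, hl, by omega, by omega, by omega, ?_, ?_⟩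
  · ext n
    rw [mem_union, Bl, hshift, (hmain n).1, Al, B]
    simp only [mem_inter_iff, mem_Icc, mem_compl_iff, Nat.zero_le, true_and]
    rw [show 2 ^ (2 * l + 1) - 1 = r2 by omega]
  · ext n
    rw [mem_union, Al, hshift, (hmain n).2, Bl, B]
    simp only [mem_inter_iff, mem_Icc, mem_compl_iff, Nat.zero_le, true_and]
    rw [show 2 ^ (2 * l + 1) - 1 = r2 by omega]
end

section
/- Let m ≥ 3, and let C, D ⊆ ℕ satisfy C ∪ D = [0, m], C ∩ D = {r_1, r_2} with r_1 < r_2, 0 ∈ C, and r_1 odd. Then R_C(n) = R_D(n) for every nonnegative integer n if and only if there exists a positive integer l such that r_1 = 2^{2l} − 1, r_2 = 2^{2l+1} + 2^{2l} − 2, m = 2^{2l+2} − 3, C = A_{2l} ∪ (2^{2l} − 1 + B_{2l}) ∪ (2^{2l+1} − 1 + (B_{2l} ∪ (2^{2l} − 1 + A_{2l}))), and D = B_{2l} ∪ (2^{2l} − 1 + A_{2l}) ∪ (2^{2l+1} − 1 + (A_{2l} ∪ (2^{2l} − 1 + B_{2l}))). -/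
open Set

namespace TM
open Polynomial

noncomputable def gf (s : Finset ℕ) : ℤ[X] := ∑ i ∈ s, X ^ i

lemma coeff_gf (s : Finset ℕ) (n : ℕ) : (gf s).coeff n = if n ∈ s then 1 else 0 := by
  simp [gf, coeff_X_pow]

lemma gf_sq_coeff (s : Finset ℕ) (n : ℕ) :
    (gf s * gf s).coeff n = 2 * (R (↑s) n : ℤ) + (expand ℤ 2 (gf s)).coeff n := by
  have e1 : (gf s * gf s).coeff n = (((s ×ˢ s).filter (fun p => p.1 + p.2 = n)).card : ℤ) := by
    rw [gf, Finset.sum_mul_sum, ← Finset.sum_product', finsetSum_coeff, Finset.card_filter]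
    push_cast
    refine Finset.sum_congr rfl fun p _ => ?_
    rw [← pow_add, coeff_X_pow]
    simp [eq_comm]
  have e2 : R (↑s) n = ((s ×ˢ s).filter (fun p => p.1 + p.2 = n ∧ p.1 < p.2)).card := by
    rw [R, ← Set.ncard_coe_finset]
    congr 1
    ext p
    simp
    tauto
  have e3 : ((s ×ˢ s).filter (fun p => p.1 + p.2 = n ∧ p.2 < p.1)).card
      = ((s ×ˢ s).filter (fun p => p.1 + p.2 = n ∧ p.1 < p.2)).card := by
    refine Finset.card_bij (fun p _ => (p.2, p.1)) ?_ ?_ ?_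
    · intro p hp; simp at hp ⊢; exact ⟨⟨hp.1.2, hp.1.1⟩, by omega, hp.2.2⟩
    · rintro ⟨a, b⟩ _ ⟨c, d⟩ _ h; simp at h ⊢; omega
    · rintro ⟨a, b⟩ hp
      refine ⟨(b, a), ?_, rfl⟩
      simp at hp ⊢; exact ⟨⟨hp.1.2, hp.1.1⟩, by omega, hp.2.2⟩
  have e4 : (expand ℤ 2 (gf s)).coeff n
      = (((s ×ˢ s).filter (fun p => p.1 + p.2 = n ∧ p.1 = p.2)).card : ℤ) := by
    rw [coeff_expand (by norm_num)]
    split_ifs with h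
    · obtain ⟨k, rfl⟩ := h
      rw [Nat.mul_div_cancel_left _ (by norm_num), coeff_gf]
      split_ifs with hk
      · have : (s ×ˢ s).filter (fun p => p.1 + p.2 = 2 * k ∧ p.1 = p.2) = {(k, k)} := by
          ext ⟨a, b⟩
          simp
          constructor
          · intro h; omega
          · rintro ⟨rfl, rfl⟩; exact ⟨⟨hk, hk⟩, by omega⟩
        rw [this]; simp
      · symm
        simp
        intro a b ha hb h h'
        subst h'
        have : a = k := by omega
        exact hk (this ▸ ha)
    · symm
      simp
      intro a b ha hb h' h''
      omega
  have e5 : ((s ×ˢ s).filter (fun p => p.1 + p.2 = n)).card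
      = ((s ×ˢ s).filter (fun p => p.1 + p.2 = n ∧ p.1 < p.2)).card
      + ((s ×ˢ s).filter (fun p => p.1 + p.2 = n ∧ p.2 < p.1)).card
      + ((s ×ˢ s).filter (fun p => p.1 + p.2 = n ∧ p.1 = p.2)).card := by
    simp only [Finset.card_filter]
    rw [← Finset.sum_add_distrib, ← Finset.sum_add_distrib]
    refine Finset.sum_congr rfl fun p _ => ?_
    split_ifs <;> omega
  rw [e1, e2, e4, e5, e3]
  push_cast
  ring

lemma R_iff (c d : Finset ℕ) : (∀ n, R (↑c) n = R (↑d) n) ↔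
    (gf c - gf d) * (gf c + gf d) = expand ℤ 2 (gf c - gf d) := by
  have key : ∀ n, ((gf c - gf d) * (gf c + gf d)).coeff n - (expand ℤ 2 (gf c - gf d)).coeff n
      = 2 * (R (↑c) n : ℤ) - 2 * R (↑d) n := by
    intro n
    have h1 := gf_sq_coeff c n
    have h2 := gf_sq_coeff d n
    have : (gf c - gf d) * (gf c + gf d) = gf c * gf c - gf d * gf d := by ring
    rw [this, map_sub, coeff_sub, coeff_sub, h1, h2]; ring
  constructor
  · intro h
    ext n
    have := key n
    rw [h n] at this
    linarith
  · intro h n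
    have := key n
    rw [h] at this
    omega

/-- power of two -/
lemma m_pow (F S : ℤ[X]) (hF : F ≠ 0) (h : F * S = expand ℤ 2 F) :
    ∃ a : ℕ, S.eval 1 = 2 ^ a := by
  obtain ⟨G, hG, hnd⟩ := exists_eq_pow_rootMultiplicity_mul_and_not_dvd F hF 1
  set a := rootMultiplicity 1 F
  refine ⟨a, ?_⟩
  have hG1 : G.eval 1 ≠ 0 := by
    intro h0; exact hnd (dvd_iff_isRoot.mpr h0)
  rw [hG] at h
  have : (X - C 1 : ℤ[X]) ^ a * (G * S) = (X - C 1) ^ a * ((X + 1) ^ a * expand ℤ 2 G) := by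
    rw [← mul_assoc, h, map_mul, map_pow, map_sub, expand_X, expand_C, ← mul_assoc, ← mul_pow]
    congr 2
    simp; ring
  have := mul_left_cancel₀ (pow_ne_zero _ (X_sub_C_ne_zero 1)) this
  have := congrArg (eval 1) this
  simp [expand_eval] at this
  have h3 : G.eval 1 * S.eval 1 = G.eval 1 * 2 ^ a := by rw [this]; ring
  exact mul_left_cancel₀ hG1 h3

lemma rev_prod (s : Multiset ℂ) (hs : ∀ z ∈ s, ‖z‖ = 1) :
    ∃ c : ℂ, ((s.map (fun z => X - C z)).prod).reverse
      = C c * ((s.map (fun z => X - C z)).prod).map (starRingEnd ℂ) := by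
  induction s using Multiset.induction_on with
  | empty => exact ⟨1, by have := reverse_C (1:ℂ); rw [C_1] at this; simpa using this⟩
  | cons z s ih =>
    obtain ⟨c, hc⟩ := ih (fun w hw => hs w (Multiset.mem_cons_of_mem hw))
    refine ⟨-z * c, ?_⟩
    have hz : ‖z‖ = 1 := hs z (Multiset.mem_cons_self z s)
    have hzz : z * (starRingEnd ℂ) z = 1 := by
      rw [Complex.mul_conj, Complex.normSq_eq_norm_sq, hz]; norm_num
    have hr : (X - C z : ℂ[X]).reverse = C (-z) * (X - C ((starRingEnd ℂ) z)) := by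
      rw [reverse, natDegree_X_sub_C, sub_eq_add_neg, ← C_neg, reflect_add, reflect_C]
      have : reflect 1 (X : ℂ[X]) = 1 := by
        simp
      rw [this, mul_sub, ← C_mul, neg_mul, hzz]
      simp; ring
    rw [Multiset.map_cons, Multiset.prod_cons, reverse_mul_of_domain, hc, hr, Polynomial.map_mul]
    simp only [Polynomial.map_sub, map_X, map_C, C_mul]
    ring

lemma rev_real (P : ℤ[X]) (h0 : P.coeff 0 = 1) (hlp : 0 < P.leadingCoeff)
    (hz : ∀ z : ℂ, aeval z P = 0 → ‖z‖ = 1) : P.reverse = P := by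
  set Q : ℂ[X] := P.map (Int.castRingHom ℂ) with hQ
  have inj : Function.Injective (Int.castRingHom ℂ) := Int.cast_injective
  have hP0 : P ≠ 0 := by rintro rfl; simp at h0
  have hQ0 : Q ≠ 0 := by rw [hQ]; exact (Polynomial.map_ne_zero_iff inj).mpr hP0
  have hr : ∀ z ∈ Q.roots, ‖z‖ = 1 := by
    intro z h
    apply hz
    have := (mem_roots hQ0).mp h
    rw [IsRoot, hQ, eval_map] at this
    exact this
  obtain ⟨c, hc⟩ := rev_prod Q.roots hr
  have hs := (IsAlgClosed.splits Q).eq_prod_roots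
  have hcm : Q.map (starRingEnd ℂ) = Q := by
    ext n; simp [hQ]
  have hrev : ∃ c' : ℂ, Q.reverse = C c' * Q := by
    have hl : (starRingEnd ℂ) Q.leadingCoeff = Q.leadingCoeff := by
      have := congrArg (fun p => p.coeff Q.natDegree) hcm
      rwa [coeff_map] at this
    refine ⟨c, ?_⟩
    conv_rhs => rw [← hcm, hs]
    conv_lhs => rw [hs]
    rw [reverse_mul_of_domain, hc, reverse_C, Polynomial.map_mul, map_C, hl]
    ring
  obtain ⟨c', hc'⟩ := hrev
  have hd : Q.natDegree = P.natDegree := natDegree_map_eq_of_injective inj P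
  have hco : ∀ i, (P.reverse.coeff i : ℂ) = c' * P.coeff i := by
    intro i
    have := congrArg (fun p => p.coeff i) hc'
    simp only [coeff_C_mul, coeff_reverse, hd] at this
    rw [coeff_reverse]
    simpa [hQ] using this
  have a1 := hco 0
  have a2 := hco P.natDegree
  rw [coeff_zero_reverse, h0] at a1
  rw [coeff_reverse, revAt_le le_rfl, Nat.sub_self, h0] at a2
  have a3 : (P.leadingCoeff : ℂ) * P.leadingCoeff = 1 := by
    simp at a1 a2
    rw [leadingCoeff, ← a1] at *
    exact a2.symm
  have a4 : P.leadingCoeff * P.leadingCoeff = 1 := by exact_mod_cast a3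
  have a5 : P.leadingCoeff = 1 := by nlinarith
  have a6 : c' = 1 := by
    rw [a5] at a1; simpa using a1.symm
  ext i
  have := hco i
  rw [a6, one_mul] at this
  exact_mod_cast this

lemma norm_root (F : ℤ[X]) (h0 : F.coeff 0 = 1) (S : ℤ[X]) (h : F * S = expand ℤ 2 F)
    (z : ℂ) (hz : aeval z F = 0) : ‖z‖ = 1 := by
  have hsq : ∀ w : ℂ, aeval w F = 0 → aeval (w ^ 2) F = 0 := by
    intro w hw
    have := congrArg (aeval w) h
    rw [map_mul, hw, zero_mul, expand_aeval] at this
    exact this.symm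
  have hit : ∀ k : ℕ, aeval (z ^ (2 ^ k)) F = 0 := by
    intro k
    induction k with
    | zero => simpa using hz
    | succ k ih => rw [pow_succ, pow_mul]; exact hsq _ ih
  have hF : F ≠ 0 := by rintro rfl; simp at h0
  have hz0 : z ≠ 0 := by
    rintro rfl
    rw [← coeff_zero_eq_aeval_zero', h0] at hz
    simp at hz
  have hfin : (F.rootSet ℂ).Finite := rootSet_finite F ℂ
  have hni : ¬ Function.Injective (fun k : ℕ => z ^ (2 ^ k)) := by
    intro hi
    refine Set.infinite_of_injective_forall_mem hi (s := F.rootSet ℂ) ?_ hfin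
    intro k
    rw [mem_rootSet]
    exact ⟨hF, hit k⟩
  by_contra hne
  apply hni
  intro i j hij
  have h2 : ‖z‖ ^ (2 ^ i) = ‖z‖ ^ (2 ^ j) := by
    have := congrArg norm hij
    simpa using this
  have := pow_right_injective₀ (norm_pos_iff.mpr hz0) hne h2
  exact Nat.pow_right_injective le_rfl this

lemma norm_root' (F : ℤ[X]) (h0 : F.coeff 0 = 1) (S : ℤ[X]) (h : F * S = expand ℤ 2 F)
    (z : ℂ) (hz : aeval z S = 0) : ‖z‖ = 1 := by
  have h1 : aeval (z ^ 2) F = 0 := by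
    have := congrArg (aeval z) h
    rw [map_mul, hz, mul_zero, expand_aeval] at this
    exact this.symm
  have := norm_root F h0 S h _ h1
  rw [norm_pow] at this
  exact (pow_eq_one_iff_of_nonneg (norm_nonneg z) (by norm_num)).mp this

end TM
namespace TM
open Polynomial

noncomputable def t (n : ℕ) : ℤ := (-1) ^ ((Nat.digits 2 n).count 1)

lemma t_zero : t 0 = 1 := by simp [t]

lemma t_odd (k : ℕ) : t (2 * k + 1) = - t k := by
  rw [t, t, Nat.digits_def' (by norm_num) (by omega)]
  have h1 : (2 * k + 1) % 2 = 1 := by omega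
  have h2 : (2 * k + 1) / 2 = k := by omega
  rw [h1, h2, List.count_cons_self, pow_succ]
  ring

lemma t_even (k : ℕ) : t (2 * k) = t k := by
  rcases Nat.eq_zero_or_pos k with rfl | hk
  · rfl
  rw [t, t, Nat.digits_def' (by norm_num) (by omega)]
  have h1 : (2 * k) % 2 = 0 := by omega
  have h2 : (2 * k) / 2 = k := by omega
  rw [h1, h2, List.count_cons_of_ne (by norm_num)]

lemma t_one : t 1 = -1 := by have := t_odd 0; simpa [t_zero] using this

lemma t_pm (n : ℕ) : t n = 1 ∨ t n = -1 := neg_one_pow_eq_or ℤ _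

lemma mem_A (n : ℕ) : n ∈ A ↔ t n = 1 := by
  rw [A, Set.mem_ofPred_eq, t, neg_one_pow_eq_one_iff_even (by norm_num)]

lemma mem_B (n : ℕ) : n ∈ B ↔ t n = -1 := by
  rw [B, Set.mem_compl_iff, mem_A]
  rcases t_pm n with h | h <;> rw [h] <;> norm_num

lemma t_add (k : ℕ) : ∀ u v : ℕ, v < 2 ^ k → t (2 ^ k * u + v) = t u * t v := by
  induction k with
  | zero => intro u v hv; have : v = 0 := by simpa using hv
            subst this; simp [t_zero]
  | succ k ih =>
    intro u v hv
    rw [pow_succ] at hv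
    rcases Nat.even_or_odd' v with ⟨w, rfl | rfl⟩
    · rw [show 2 ^ (k + 1) * u + 2 * w = 2 * (2 ^ k * u + w) by ring, t_even, t_even,
        ih u w (by omega)]
    · rw [show 2 ^ (k + 1) * u + (2 * w + 1) = 2 * (2 ^ k * u + w) + 1 by ring, t_odd, t_odd,
        ih u w (by omega)]
      ring

lemma t_pow_mul (k u : ℕ) : t (2 ^ k * u) = t u := by
  have := t_add k u 0 (by positivity)
  simpa [t_zero] using this

lemma t_pow (k : ℕ) : t (2 ^ k) = -1 := by
  have := t_pow_mul k 1
  simpa [t_one] using this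

lemma t_compl (k : ℕ) : ∀ v : ℕ, v < 2 ^ k → t (2 ^ k - 1 - v) = (-1) ^ k * t v := by
  induction k with
  | zero => intro v hv; have : v = 0 := by simpa using hv
            subst this; simp [t_zero]
  | succ k ih =>
    intro v hv
    rw [pow_succ] at hv
    rcases Nat.even_or_odd' v with ⟨w, rfl | rfl⟩
    · rw [show 2 ^ (k + 1) - 1 - 2 * w = 2 * (2 ^ k - 1 - w) + 1 by rw [pow_succ]; omega, t_even,
        t_odd, ih w (by omega)]
      ring
    · rw [show 2 ^ (k + 1) - 1 - (2 * w + 1) = 2 * (2 ^ k - 1 - w) by rw [pow_succ]; omega, t_even,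
        t_odd, ih w (by omega)]
      ring

lemma t_pow_sub_one (k : ℕ) : t (2 ^ k - 1) = (-1) ^ k := by
  have := t_compl k 0 (by positivity)
  simpa [t_zero] using this

def sh (f : ℕ → ℤ) (r n : ℕ) : ℤ := if r ≤ n then f (n - r) else 0

/-- the pointwise recurrence -/
structure Rec (f : ℕ → ℤ) (m r1 r2 : ℕ) : Prop where
  ev : ∀ k, 2 * k ≤ m → f (2 * k) + sh f r1 (2 * k) - sh f (r1 + 1) (2 * k)
    + sh f r2 (2 * k) - sh f (r2 + 1) (2 * k) = f k
  od : ∀ k, 2 * k + 1 ≤ m → f (2 * k + 1) + sh f r1 (2 * k + 1) - sh f (r1 + 1) (2 * k + 1)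
    + sh f r2 (2 * k + 1) - sh f (r2 + 1) (2 * k + 1) = - f k

lemma rec_of_eq (F : ℤ[X]) (m r1 r2 : ℕ)
    (h : F * (gf (Finset.range (m + 1)) + X ^ r1 + X ^ r2) = expand ℤ 2 F) :
    Rec (fun n => F.coeff n) m r1 r2 := by
  have hg : gf (Finset.range (m + 1)) * (1 - X) = 1 - X ^ (m + 1) := by
    rw [gf]; have := geom_sum_mul_neg (X : ℤ[X]) (m + 1); exact this
  have h2 : F + F * X ^ r1 - F * X ^ (r1 + 1) + F * X ^ r2 - F * X ^ (r2 + 1) - F * X ^ (m + 1)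
      = expand ℤ 2 F - expand ℤ 2 F * X := by
    have : (F * (gf (Finset.range (m + 1)) + X ^ r1 + X ^ r2)) * (1 - X)
      = F * (1 - X ^ (m + 1) + (X ^ r1 + X ^ r2) * (1 - X)) := by
      rw [← hg]; ring
    rw [h] at this
    linear_combination - this
  have hc : ∀ n, n ≤ m → F.coeff n + sh F.coeff r1 n - sh F.coeff (r1 + 1) n + sh F.coeff r2 n
      - sh F.coeff (r2 + 1) n = (expand ℤ 2 F).coeff n - (expand ℤ 2 F * X).coeff n := by
    intro n hn
    have := congrArg (fun p => p.coeff n) h2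
    simp only [coeff_sub, coeff_add, coeff_mul_X_pow'] at this
    rw [if_neg (show ¬ (m + 1 ≤ n) by omega), sub_zero] at this
    exact this
  constructor
  · intro k hk
    have := hc _ hk
    rw [show F.coeff k = (expand ℤ 2 F).coeff (2 * k) - (expand ℤ 2 F * X).coeff (2 * k) from ?_]
    · exact this
    · rcases k with _ | k
      · simp [coeff_expand]
      · rw [show 2 * (k + 1) = (2 * k + 1) + 1 by ring, coeff_mul_X, coeff_expand (by norm_num),
          coeff_expand (by norm_num), if_pos (by omega), if_neg (by omega),
          show (2 * k + 1 + 1) / 2 = k + 1 by omega, sub_zero]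
  · intro k hk
    have := hc _ hk
    rw [coeff_mul_X, coeff_expand (by norm_num), coeff_expand (by norm_num), if_neg (by omega),
      if_pos (by omega), show (2 * k) / 2 = k by omega, zero_sub] at this
    exact this

lemma rec_unique (f g : ℕ → ℤ) (m r1 r2 : ℕ) (h1 : 0 < r1) (h12 : r1 < r2) (hf : Rec f m r1 r2)
    (hg : Rec g m r1 r2)
    (h0 : f 0 = g 0) : ∀ n, n ≤ m → f n = g n := by
  intro n
  induction n using Nat.strong_induction_on with
  | _ n ih =>
    intro hn
    have hs : ∀ r, 0 < r → sh f r n = sh g r n := by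
      intro r hr
      unfold sh
      split_ifs with hrn
      · exact ih _ (by omega) (by omega)
      · rfl
    have e1 := hs r1 (by omega)
    have e2 := hs (r1 + 1) (by omega)
    have e3 := hs r2 (by omega)
    have e4 := hs (r2 + 1) (by omega)
    rcases Nat.even_or_odd' n with ⟨k, rfl | rfl⟩
    · rcases Nat.eq_zero_or_pos k with rfl | hk
      · exact h0
      have a := hf.ev k hn
      have b := hg.ev k hn
      have c := ih k (by omega) (by omega)
      linarith
    · have a := hf.od k hn
      have b := hg.od k hn
      have c := ih k (by omega) (by omega)
      linarith

end TM
namespace TM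
open Polynomial

lemma comb (f : ℕ → ℤ) (m r1 r2 a : ℕ) (hm3 : 3 ≤ m) (hm : m + 3 = 2 ^ a) (hr : r1 + r2 = m)
    (h12 : r1 < r2) (hodd : Odd r1) (H : Rec f m r1 r2) (f0 : f 0 = 1) (fr1 : f r1 = 0)
    (fr2 : f r2 = 0) (hpm : ∀ n, n ≤ m → n ≠ r1 → n ≠ r2 → f n = 1 ∨ f n = -1) :
    ∃ l : ℕ, 0 < l ∧ r1 = 2 ^ (2 * l) - 1 ∧ r2 = 2 ^ (2 * l + 1) + 2 ^ (2 * l) - 2 ∧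
        m = 2 ^ (2 * l + 2) - 3 := by
  have ha : 3 ≤ a := by
    by_contra hlt
    have : 2 ^ a ≤ 2 ^ 2 := Nat.pow_le_pow_right (by norm_num) (by omega)
    omega
  obtain ⟨b, rfl⟩ : ∃ b, a = b + 3 := ⟨a - 3, by omega⟩
  have hb : 2 ^ (b + 3) = 8 * 2 ^ b := by ring
  have hbpos : 0 < 2 ^ b := by positivity
  -- values below r1
  have low : ∀ n, n < r1 → f n = t n := by
    intro n
    induction n using Nat.strong_induction_on with
    | _ n ih =>
      intro hn
      rcases Nat.even_or_odd' n with ⟨k, rfl | rfl⟩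
      · rcases Nat.eq_zero_or_pos k with rfl | hk
        · rw [t_zero]; exact f0
        have e := H.ev k (by omega)
        have c := ih k (by omega) (by omega)
        simp only [sh] at e
        rw [if_neg (by omega), if_neg (by omega), if_neg (by omega), if_neg (by omega)] at e
        rw [t_even]; linarith
      · have e := H.od k (by omega)
        have c := ih k (by omega) (by omega)
        simp only [sh] at e
        rw [if_neg (by omega), if_neg (by omega), if_neg (by omega), if_neg (by omega)] at e
        rw [t_odd]; linarith
  -- recurrences in the middle
  have mev : ∀ k, 2 * k < r2 → r1 + 1 ≤ 2 * k →
      f (2 * k) + f (2 * k - r1) - f (2 * k - r1 - 1) = f k := by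
    intro k hk hk'
    have e := H.ev k (by omega)
    simp only [sh] at e
    rw [if_pos (by omega), if_pos (by omega), if_neg (by omega), if_neg (by omega)] at e
    rw [Nat.sub_sub]
    linarith
  have mod : ∀ k, 2 * k + 1 < r2 → r1 + 1 ≤ 2 * k + 1 →
      f (2 * k + 1) + f (2 * k + 1 - r1) - f (2 * k + 1 - r1 - 1) = - f k := by
    intro k hk hk'
    have e := H.od k (by omega)
    simp only [sh] at e
    rw [if_pos (by omega), if_pos (by omega), if_neg (by omega), if_neg (by omega)] at e
    rw [Nat.sub_sub]
    linarith
  obtain ⟨q, hq⟩ := hodd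
  have tr : t r1 = 1 := by
    have e := H.od q (by omega)
    simp only [sh] at e
    rw [if_pos (by omega), if_neg (by omega), if_neg (by omega), if_neg (by omega), ← hq, fr1,
      Nat.sub_self, f0] at e
    have := low q (by omega)
    rw [hq, t_odd]; linarith
  have hr3 : 3 ≤ r1 := by
    by_contra hlt
    have : r1 = 1 := by omega
    rw [this, t_one] at tr
    norm_num at tr
  -- main local lemma
  have L : ∀ i, Even i → r1 + 1 + i < r2 → r1 + 1 + i < 2 * r1 → t (r1 + 1 + i) = - t i := by
    rintro i ⟨j, rfl⟩ h1 h2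
    have e := mev (q + 1 + j) (by omega) (by omega)
    have c1 := low (q + 1 + j) (by omega)
    rw [show 2 * (q + 1 + j) - r1 = 2 * j + 1 by omega, show 2 * j + 1 - 1 = 2 * j by omega,
      low (2 * j + 1) (by omega), low (2 * j) (by omega), t_odd, t_even, c1] at e
    have c2 := hpm (2 * (q + 1 + j)) (by omega) (by omega) (by omega)
    have c3 := t_pm (q + 1 + j)
    have c4 := t_pm j
    rw [show r1 + 1 + (j + j) = 2 * (q + 1 + j) by omega, ← two_mul, t_even, t_even]
    omega
  have tR : t (r1 + 1) = -1 := by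
    have := L 0 (by simp) (by omega) (by omega)
    simpa [t_zero] using this
  obtain ⟨k, u, hu, hR⟩ := Nat.exists_eq_two_pow_mul_odd (n := r1 + 1) (by omega)
  obtain ⟨w, hw⟩ := hu
  have hkpos : 0 < 2 ^ k := by positivity
  have tu : t u = -1 := by rw [← t_pow_mul k u, ← hR]; exact tR
  have hke : Even k := by
    have h1 : r1 = 2 ^ k * (2 * w) + (2 ^ k - 1) := by
      have : 2 ^ k * u = 2 ^ k * (2 * w) + 2 ^ k := by rw [hw]; ring
      omega
    rw [h1, t_add _ _ _ (by omega), t_pow_sub_one, t_even] at tr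
    rw [hw, t_odd] at tu
    have : t w = 1 := by linarith
    rw [this, one_mul] at tr
    exact (neg_one_pow_eq_one_iff_even (by norm_num)).mp tr
  have hk0 : k ≠ 0 := by
    rintro rfl
    simp at hR
    omega
  obtain ⟨l, hl⟩ := hke
  have hl0 : 0 < l := by omega
  have hk4 : ∃ N, 2 ^ k = 4 * N := ⟨2 ^ (k - 2), by
    rw [show k = (k - 2) + 2 by omega, pow_add]; simp; ring⟩
  obtain ⟨N4, hN4⟩ := hk4
  have hR4 : r1 + 1 = 4 * (N4 * u) := by rw [hR, hN4]; ring
  by_cases hu1 : u = 1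
  · -- final size
    subst hu1
    rw [mul_one] at hR
    set N := 2 ^ k with hN
    have hka : k ≤ b + 1 := by
      by_contra hlt
      have : 2 ^ (b + 2) ≤ 2 ^ k := Nat.pow_le_pow_right (by norm_num) (by omega)
      have : 2 ^ (b + 2) = 4 * 2 ^ b := by ring
      omega
    have hkb : k = b + 1 := by
      by_contra hne
      have hle : 2 ^ k ≤ 2 ^ b := Nat.pow_le_pow_right (by norm_num) (by omega)
      rw [← hN] at hle
      obtain ⟨p, hp⟩ : ∃ p, k = p + 2 := ⟨k - 2, by omega⟩
      have hNp : N = 4 * 2 ^ p := by rw [hN, hp]; ring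
      set P := 2 ^ p with hP
      have hPpos : 0 < P := by positivity
      have hpe : Even p := ⟨l - 1, by omega⟩
      -- f N
      have tP : t (2 * P) = -1 := by rw [t_even, hP, t_pow]
      have t2 : t 2 = -1 := t_pow 1
      have e1 := mev (2 * P) (by omega) (by omega)
      rw [show 2 * (2 * P) - r1 = 1 by omega, show 1 - 1 = 0 from rfl, low (2 * P) (by omega),
        low 1 (by omega), f0, t_one, tP] at e1
      have e2 := mod (2 * P) (by omega) (by omega)
      rw [show 2 * (2 * P) + 1 - r1 = 2 by omega, show 2 - 1 = 1 from rfl, low (2 * P) (by omega),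
        low 1 (by omega), low 2 (by omega), t_one, t2, tP] at e2
      have e3 := mev (4 * P) (by omega) (by omega)
      rw [show 2 * (4 * P) - r1 = 2 * (2 * P) + 1 by omega, show 2 * (2 * P) + 1 - 1 = 2 * (2 * P) by omega,
        show 4 * P = 2 * (2 * P) by ring] at e3
      have e4 := mod (4 * P - 1) (by omega) (by omega)
      rw [show 2 * (4 * P - 1) + 1 - r1 = 2 * (2 * P) by omega, show 2 * (2 * P) - 1 = r1 by omega,
        show 4 * P - 1 = r1 by omega, fr1] at e4
      have tc : t (2 * P - 1) = -1 := by
        have := t_pow_sub_one (p + 1)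
        rw [pow_succ, ← hP, pow_succ, hpe.neg_one_pow] at this
        rw [mul_comm 2 P, this]; norm_num
      have td : t (3 * P - 1) = -1 := by
        have := t_add p 2 (P - 1) (by omega)
        rw [t_pow_sub_one, hpe.neg_one_pow, t2, ← hP] at this
        rw [show 3 * P - 1 = P * 2 + (P - 1) by omega, this]; norm_num
      have e5 := mod (3 * P - 1) (by omega) (by omega)
      rw [show 2 * (3 * P - 1) + 1 - r1 = 2 * P by omega, low (2 * P) (by omega), 
        low (2 * P - 1) (by omega), low (3 * P - 1) (by omega), tP, tc, td] at e5
      have e6 := mod (6 * P - 1) (by omega) (by omega)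
      rw [show 2 * (6 * P - 1) + 1 - r1 = 2 * (2 * (2 * P)) by omega,
        show 2 * (2 * (2 * P)) - 1 = 2 * r1 + 1 by omega,
        show 6 * P - 1 = 2 * (3 * P - 1) + 1 by omega] at e6
      have e7 := hpm (2 * (2 * (3 * P - 1) + 1) + 1) (by omega) (by omega) (by omega)
      omega
    refine ⟨l, hl0, ?_⟩
    have g0 : 2 ^ (2 * l) = N := by rw [hN, hl, two_mul]
    have g1 : 2 ^ (2 * l + 1) = 2 * N := by rw [pow_succ, g0]; ring
    have g2 : 2 ^ (2 * l + 2) = 4 * N := by rw [pow_succ, g1]; ring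
    have g3 : N = 2 * 2 ^ b := by rw [hN, hkb]; ring
    rw [g0, g1, g2]
    omega
  · exfalso
    obtain ⟨e, he1, he2⟩ : ∃ e, 2 ^ e ≤ r1 + 1 ∧ r1 + 1 < 2 ^ (e + 1) :=
      ⟨Nat.log 2 (r1 + 1), Nat.pow_log_le_self 2 (by omega), Nat.lt_pow_succ_log_self (by norm_num) _⟩
    have hne : 2 ^ e ≠ r1 + 1 := by
      intro h
      rw [hR] at h
      have : u ∣ 2 ^ e := ⟨2 ^ k, by rw [h]; ring⟩
      have hc : Nat.Coprime u (2 ^ e) := by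
        apply Nat.Coprime.pow_right
        rw [Nat.coprime_comm, Nat.coprime_two_left]
        exact ⟨w, hw⟩
      exact hu1 (Nat.Coprime.eq_one_of_dvd hc this)
    have he : 2 ≤ e := by
      by_contra hlt
      have : 2 ^ (e + 1) ≤ 2 ^ 2 := Nat.pow_le_pow_right (by norm_num) (by omega)
      omega
    obtain ⟨g, rfl⟩ : ∃ g, e = g + 2 := ⟨e - 2, by omega⟩
    have hG1 : 2 ^ (g + 2) = 4 * 2 ^ g := by ring
    have hG2 : 2 ^ (g + 2 + 1) = 8 * 2 ^ g := by ring
    set G := 2 ^ g with hG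
    have hGpos : 0 < G := by positivity
    have case1 : r2 ≤ r1 + 1 + 4 * G := by
      by_contra hlt
      have l1 := L (4 * G) ⟨2 * G, by ring⟩ (by omega) (by omega)
      obtain ⟨v, hv⟩ : ∃ v, r1 + 1 = 4 * G + v := ⟨r1 + 1 - 4 * G, by omega⟩
      have x1 := t_add (g + 2) 1 v (by omega)
      have x2 := t_add (g + 2 + 1) 1 v (by omega)
      rw [hG1, mul_one, ← hv, tR, t_one] at x1
      rw [hG2, mul_one, show 8 * G + v = r1 + 1 + 4 * G by omega, l1, ← hG1, t_pow, t_one] at x2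
      omega
    have hgb : g + 1 = b := by
      rcases lt_trichotomy (g + 1) b with h | h | h
      · have : 2 ^ (g + 2) ≤ 2 ^ b := Nat.pow_le_pow_right (by norm_num) (by omega)
        omega
      · exact h
      · have : 2 ^ (b + 2) ≤ 2 ^ (g + 2) := Nat.pow_le_pow_right (by norm_num) (by omega)
        have : 2 ^ (b + 2) = 4 * 2 ^ b := by ring
        omega
    have hbG : 2 ^ b = 2 * G := by rw [← hgb, hG]; ring
    obtain ⟨Q, hQ⟩ : ∃ Q, r1 + 1 + Q = 8 * G := ⟨8 * G - (r1 + 1), by omega⟩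
    have l1 := L Q ⟨4 * G - (q + 1), by omega⟩ (by omega) (by omega)
    rw [hQ, ← hG2, t_pow] at l1
    have x1 := t_compl (g + 2 + 1) Q (by omega)
    rw [hG2, show 8 * G - 1 - Q = r1 by omega, tr] at x1
    have x2 := t_compl (g + 2 + 1) (Q - 1) (by omega)
    rw [hG2, show 8 * G - 1 - (Q - 1) = r1 + 1 by omega, tR] at x2
    have hQ1 : t Q = 1 := by linarith
    rw [hQ1, mul_one] at x1
    rw [← x1, one_mul] at x2
    have e := H.ev (4 * G + Q / 2 - 1) (by omega)
    simp only [sh] at e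
    rw [if_pos (by omega), if_pos (by omega), if_pos (by omega), if_neg (by omega),
      show 2 * (4 * G + Q / 2 - 1) = r2 by omega, fr2, Nat.sub_self, f0,
      show r2 - r1 = 2 * (Q - 1) + 1 by omega, show r2 - (r1 + 1) = 2 * (Q - 1) by omega,
      low (2 * (Q - 1) + 1) (by omega), low (2 * (Q - 1)) (by omega), t_odd, t_even, ← x2,
      low (4 * G + Q / 2 - 1) (by omega)] at e
    have := t_pm (4 * G + Q / 2 - 1)
    omega

end TM
namespace TM
open Polynomial

noncomputable def al (k : ℕ) : Finset ℕ := (Finset.range (2 ^ k)).filter (fun n => t n = 1)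
noncomputable def bl (k : ℕ) : Finset ℕ := (Finset.range (2 ^ k)).filter (fun n => t n = -1)

lemma mem_al (k n : ℕ) : n ∈ al k ↔ n < 2 ^ k ∧ t n = 1 := by simp [al]
lemma mem_bl (k n : ℕ) : n ∈ bl k ↔ n < 2 ^ k ∧ t n = -1 := by simp [bl]

lemma coe_al (k : ℕ) : (↑(al k) : Set ℕ) = Al k := by
  ext n
  have : 0 < 2 ^ k := by positivity
  rw [Finset.mem_coe, mem_al, Al, Set.mem_inter_iff, mem_A, Set.mem_Icc]
  constructor
  · rintro ⟨h, h'⟩; exact ⟨h', by omega, by omega⟩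
  · rintro ⟨h, h'⟩; exact ⟨by omega, h⟩

lemma coe_bl (k : ℕ) : (↑(bl k) : Set ℕ) = Bl k := by
  ext n
  have : 0 < 2 ^ k := by positivity
  rw [Finset.mem_coe, mem_bl, Bl, Set.mem_inter_iff, mem_B, Set.mem_Icc]
  constructor
  · rintro ⟨h, h'⟩; exact ⟨h', by omega, by omega⟩
  · rintro ⟨h, h'⟩; exact ⟨by omega, h⟩

lemma gf_union (s u : Finset ℕ) (h : Disjoint s u) : gf (s ∪ u) = gf s + gf u :=
  Finset.sum_union h

lemma gf_shift (s : Finset ℕ) (k : ℕ) : gf (s.image (fun x => k + x)) = X ^ k * gf s := by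
  rw [gf, Finset.sum_image (by intro a _ b _ h; simpa using h), gf, Finset.mul_sum]
  exact Finset.sum_congr rfl fun i _ => pow_add _ _ _

lemma gf_add (k : ℕ) : gf (al k) + gf (bl k) = gf (Finset.range (2 ^ k)) := by
  ext n
  rw [coeff_add, coeff_gf, coeff_gf, coeff_gf]
  simp only [mem_al, mem_bl, Finset.mem_range]
  rcases t_pm n with h | h <;> simp [h]

lemma coeff_T (k n : ℕ) : (gf (al k) - gf (bl k)).coeff n = if n < 2 ^ k then t n else 0 := by
  rw [coeff_sub, coeff_gf, coeff_gf]
  simp only [mem_al, mem_bl]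
  rcases t_pm n with h | h <;> simp [h]
  split_ifs <;> simp

lemma T_succ (k : ℕ) : gf (al (k + 1)) - gf (bl (k + 1))
    = (gf (al k) - gf (bl k)) * (1 - X ^ (2 ^ k)) := by
  ext n
  rw [coeff_T, mul_sub, mul_one, coeff_sub, coeff_T, coeff_mul_X_pow', coeff_T]
  have h2 : 2 ^ (k + 1) = 2 * 2 ^ k := by ring
  by_cases h : n < 2 ^ k
  · rw [if_pos (by omega), if_pos h, if_neg (by omega)]; ring
  · rw [if_neg h, if_pos (show 2 ^ k ≤ n by omega)]
    by_cases h' : n < 2 ^ (k + 1)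
    · rw [if_pos h', if_pos (show n - 2 ^ k < 2 ^ k by omega)]
      have := t_add k 1 (n - 2 ^ k) (by omega)
      rw [mul_one, Nat.add_sub_cancel' (by omega), t_one] at this
      rw [this]; ring
    · rw [if_neg h', if_neg (show ¬ n - 2 ^ k < 2 ^ k by omega)]; ring

lemma T_succ' (k : ℕ) : gf (al (k + 1)) - gf (bl (k + 1))
    = expand ℤ 2 (gf (al k) - gf (bl k)) * (1 - X) := by
  ext n
  have h2 : 2 ^ (k + 1) = 2 * 2 ^ k := by ring
  rw [coeff_T, mul_sub, mul_one, coeff_sub]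
  rcases Nat.even_or_odd' n with ⟨j, rfl | rfl⟩
  · have : (expand ℤ 2 (gf (al k) - gf (bl k)) * X).coeff (2 * j) = 0 := by
      rcases j with _ | j
      · simp
      · rw [show 2 * (j + 1) = (2 * j + 1) + 1 by ring, coeff_mul_X, coeff_expand (by norm_num),
          if_neg (by omega)]
    rw [this, coeff_expand (by norm_num), if_pos (show 2 ∣ 2 * j by omega), coeff_T,
      show 2 * j / 2 = j by omega, sub_zero, t_even]
    by_cases h : j < 2 ^ k
    · rw [if_pos h, if_pos (by omega)]
    · rw [if_neg h, if_neg (by omega)]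
  · rw [coeff_mul_X, coeff_expand (by norm_num), if_neg (show ¬ 2 ∣ 2 * j + 1 by omega),
      coeff_expand (by norm_num), if_pos (show 2 ∣ 2 * j by omega), coeff_T, show 2 * j / 2 = j by omega, zero_sub, t_odd]
    by_cases h : j < 2 ^ k
    · rw [if_pos h, if_pos (by omega)]
    · rw [if_neg h, if_neg (by omega)]; simp

noncomputable def c0 (l : ℕ) : Finset ℕ :=
  al (2 * l) ∪ (bl (2 * l)).image (fun x => 2 ^ (2 * l) - 1 + x) ∪
    (bl (2 * l) ∪ (al (2 * l)).image (fun x => 2 ^ (2 * l) - 1 + x)).image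
      (fun x => 2 ^ (2 * l + 1) - 1 + x)

noncomputable def d0 (l : ℕ) : Finset ℕ :=
  bl (2 * l) ∪ (al (2 * l)).image (fun x => 2 ^ (2 * l) - 1 + x) ∪
    (al (2 * l) ∪ (bl (2 * l)).image (fun x => 2 ^ (2 * l) - 1 + x)).image
      (fun x => 2 ^ (2 * l + 1) - 1 + x)

lemma t_top (l : ℕ) : t (2 ^ (2 * l) - 1) = 1 := by
  rw [t_pow_sub_one]; simp

lemma dj1 (l : ℕ) : Disjoint (al (2 * l)) ((bl (2 * l)).image (fun x => 2 ^ (2 * l) - 1 + x)) := by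
  rw [Finset.disjoint_left]
  intro x hx hy
  rw [Finset.mem_image] at hy
  obtain ⟨y, hy, rfl⟩ := hy
  rw [mem_al] at hx
  rw [mem_bl] at hy
  have : y = 0 := by omega
  rw [this, t_zero] at hy
  omega

lemma dj2 (l : ℕ) : Disjoint (bl (2 * l)) ((al (2 * l)).image (fun x => 2 ^ (2 * l) - 1 + x)) := by
  rw [Finset.disjoint_left]
  intro x hx hy
  rw [Finset.mem_image] at hy
  obtain ⟨y, hy, rfl⟩ := hy
  rw [mem_bl] at hx
  rw [mem_al] at hy
  have : y = 0 := by omega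
  rw [this, add_zero, t_top] at hx
  omega

lemma gf_c0 (l : ℕ) : gf (c0 l) = gf (al (2 * l)) + X ^ (2 ^ (2 * l) - 1) * gf (bl (2 * l)) +
    X ^ (2 ^ (2 * l + 1) - 1) * (gf (bl (2 * l)) + X ^ (2 ^ (2 * l) - 1) * gf (al (2 * l))) := by
  rw [c0, gf_union, gf_union _ _ (dj1 l), gf_shift, gf_shift, gf_union _ _ (dj2 l), gf_shift]
  rw [Finset.disjoint_left]
  have h2 : 2 ^ (2 * l + 1) = 2 * 2 ^ (2 * l) := by ring
  intro x hx hy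
  simp only [Finset.mem_union, Finset.mem_image, mem_al, mem_bl] at hx hy
  obtain ⟨y, -, hy⟩ := hy
  rcases hx with hx | ⟨z, hz, hx⟩ <;> omega

lemma gf_d0 (l : ℕ) : gf (d0 l) = gf (bl (2 * l)) + X ^ (2 ^ (2 * l) - 1) * gf (al (2 * l)) +
    X ^ (2 ^ (2 * l + 1) - 1) * (gf (al (2 * l)) + X ^ (2 ^ (2 * l) - 1) * gf (bl (2 * l))) := by
  rw [d0, gf_union, gf_union _ _ (dj2 l), gf_shift, gf_shift, gf_union _ _ (dj1 l), gf_shift]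
  rw [Finset.disjoint_left]
  have h2 : 2 ^ (2 * l + 1) = 2 * 2 ^ (2 * l) := by ring
  intro x hx hy
  simp only [Finset.mem_union, Finset.mem_image, mem_al, mem_bl] at hx hy
  obtain ⟨y, -, hy⟩ := hy
  rcases hx with hx | ⟨z, hz, hx⟩ <;> omega

lemma gf_range (n : ℕ) : gf (Finset.range n) * (1 - X) = 1 - X ^ n := by
  rw [gf]; exact geom_sum_mul_neg (X : ℤ[X]) n

lemma one_sub_X_ne : (1 - X : ℤ[X]) ≠ 0 := by
  intro h
  have := congrArg (eval 0) h
  simp at this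

lemma sum0 (l : ℕ) : gf (c0 l) + gf (d0 l) = gf (Finset.range (2 ^ (2 * l + 2) - 3 + 1))
    + X ^ (2 ^ (2 * l) - 1) + X ^ (2 ^ (2 * l + 1) + 2 ^ (2 * l) - 2) := by
  apply mul_right_cancel₀ one_sub_X_ne
  have e1 : gf (c0 l) + gf (d0 l) = gf (Finset.range (2 ^ (2 * l)))
     * ((1 + X ^ (2 ^ (2 * l) - 1)) * (1 + X ^ (2 ^ (2 * l + 1) - 1))) := by
    rw [gf_c0, gf_d0, ← gf_add]; ring
  have hpos : 0 < 2 ^ (2 * l) := by positivity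
  obtain ⟨M, hM⟩ : ∃ M, 2 ^ (2 * l) = M + 1 := ⟨2 ^ (2 * l) - 1, by omega⟩
  have h2 : 2 ^ (2 * l + 1) = 2 * M + 2 := by rw [pow_succ, hM]; ring
  have h3 : 2 ^ (2 * l + 2) = 4 * M + 4 := by rw [pow_succ, h2]; ring
  rw [e1, mul_right_comm, gf_range, add_mul, add_mul, add_mul, gf_range, h2, h3, hM,
    show M + 1 - 1 = M by omega, show 2 * M + 2 - 1 = 2 * M + 1 by omega,
    show 4 * M + 4 - 3 + 1 = 4 * M + 2 by omega, show 2 * M + 2 + (M + 1) - 2 = 3 * M + 1 by omega]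
  ring

lemma eq0 (l : ℕ) : (gf (c0 l) - gf (d0 l)) * (gf (c0 l) + gf (d0 l))
    = expand ℤ 2 (gf (c0 l) - gf (d0 l)) := by
  apply mul_right_cancel₀ one_sub_X_ne
  have e1 : gf (c0 l) + gf (d0 l) = gf (Finset.range (2 ^ (2 * l)))
     * ((1 + X ^ (2 ^ (2 * l) - 1)) * (1 + X ^ (2 ^ (2 * l + 1) - 1))) := by
    rw [gf_c0, gf_d0, ← gf_add]; ring
  have e2 : gf (c0 l) - gf (d0 l) = (gf (al (2 * l)) - gf (bl (2 * l)))
     * ((1 - X ^ (2 ^ (2 * l) - 1)) * (1 - X ^ (2 ^ (2 * l + 1) - 1))) := by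
    rw [gf_c0, gf_d0]; ring
  have e3 := (T_succ' (2 * l)).symm.trans (T_succ (2 * l))
  rw [e1, e2]
  set T := gf (al (2 * l)) - gf (bl (2 * l))
  set p := 2 ^ (2 * l) - 1
  set q := 2 ^ (2 * l + 1) - 1
  have e4 : expand ℤ 2 (T * ((1 - X ^ p) * (1 - X ^ q)))
      = expand ℤ 2 T * (((1 - X ^ p) * (1 - X ^ q)) * ((1 + X ^ p) * (1 + X ^ q))) := by
    simp only [map_mul, map_sub, map_one, map_pow, expand_X]
    ring
  have e5 := gf_range (2 ^ (2 * l))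
  rw [e4]
  linear_combination (T * ((1 - X ^ p) * (1 - X ^ q)) * ((1 + X ^ p) * (1 + X ^ q))) * e5
    - (((1 - X ^ p) * (1 - X ^ q)) * ((1 + X ^ p) * (1 + X ^ q))) * e3

lemma zero0 (l : ℕ) (hl : 0 < l) : (gf (c0 l) - gf (d0 l)).coeff 0 = 1 := by
  have h1 : 2 ≤ 2 ^ (2 * l) := by
    calc 2 = 2 ^ 1 := rfl
      _ ≤ _ := Nat.pow_le_pow_right (by norm_num) (by omega)
  have h2 : 2 ^ (2 * l + 1) = 2 * 2 ^ (2 * l) := by ring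
  have c : 0 ∈ c0 l := by
    simp only [c0, Finset.mem_union, mem_al]
    exact Or.inl (Or.inl ⟨by omega, t_zero⟩)
  have d : 0 ∉ d0 l := by
    intro h
    simp only [d0, Finset.mem_union, mem_bl, Finset.mem_image, t_zero] at h
    rcases h with (h | ⟨y, -, h⟩) | ⟨y, -, h⟩ <;> omega
  rw [coeff_sub, coeff_gf, coeff_gf, if_pos c, if_neg d]; norm_num

end TM
namespace TM
open Polynomial

lemma coe_c0 (l : ℕ) : (↑(c0 l) : Set ℕ) = Al (2 * l) ∪ ((fun x => 2 ^ (2 * l) - 1 + x) '' Bl (2 * l)) ∪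
              ((fun x => 2 ^ (2 * l + 1) - 1 + x) ''
                (Bl (2 * l) ∪ ((fun x => 2 ^ (2 * l) - 1 + x) '' Al (2 * l)))) := by
  simp only [c0, Finset.coe_union, Finset.coe_image, coe_al, coe_bl]

lemma coe_d0 (l : ℕ) : (↑(d0 l) : Set ℕ) = Bl (2 * l) ∪ ((fun x => 2 ^ (2 * l) - 1 + x) '' Al (2 * l)) ∪
              ((fun x => 2 ^ (2 * l + 1) - 1 + x) ''
                (Al (2 * l) ∪ ((fun x => 2 ^ (2 * l) - 1 + x) '' Bl (2 * l)))) := by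
  simp only [d0, Finset.coe_union, Finset.coe_image, coe_al, coe_bl]

lemma fwd (m r1 r2 : ℕ) (hm : 3 ≤ m) (c d : Finset ℕ)
    (h1 : c ∪ d = Finset.range (m + 1)) (h2 : c ∩ d = {r1, r2}) (h3 : r1 < r2)
    (h4 : (0 : ℕ) ∈ c) (h5 : Odd r1) (h : ∀ n : ℕ, R (↑c) n = R (↑d) n) :
    ∃ l : ℕ, 0 < l ∧ r1 = 2 ^ (2 * l) - 1 ∧ r2 = 2 ^ (2 * l + 1) + 2 ^ (2 * l) - 2 ∧
        m = 2 ^ (2 * l + 2) - 3 ∧ c = c0 l ∧ d = d0 l := by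
  rw [R_iff] at h
  have hS : gf c + gf d = gf (Finset.range (m + 1)) + X ^ r1 + X ^ r2 := by
    have : gf (c ∪ d) + gf (c ∩ d) = gf c + gf d := Finset.sum_union_inter
    rw [← this, h1, h2, gf, gf, Finset.sum_pair (by omega), add_assoc]
  have hU : ∀ n, n ≤ m ↔ (n ∈ c ∨ n ∈ d) := by
    intro n
    rw [← Finset.mem_union, h1, Finset.mem_range]; omega
  have hI : ∀ n, (n ∈ c ∧ n ∈ d) ↔ (n = r1 ∨ n = r2) := by
    intro n
    rw [← Finset.mem_inter, h2]; simp
  have hr2m : r2 ≤ m := (hU r2).mpr (Or.inl ((hI r2).mpr (Or.inr rfl)).1)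
  have hr1 : 0 < r1 := h5.pos
  set F := gf c - gf d with hF
  have hFc : ∀ n, F.coeff n = (if n ∈ c then 1 else 0) - (if n ∈ d then 1 else 0) := by
    intro n; rw [hF, coeff_sub, coeff_gf, coeff_gf]
  have F0 : F.coeff 0 = 1 := by
    have : 0 ∉ d := by
      intro h0
      have := (hI 0).mp ⟨h4, h0⟩
      omega
    rw [hFc, if_pos h4, if_neg this]; norm_num
  have hF0 : F ≠ 0 := by intro h0; rw [h0] at F0; simp at F0
  rw [hS] at h
  have hrec := rec_of_eq F m r1 r2 h
  obtain ⟨a, ha⟩ := m_pow F _ hF0 h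
  have hma : m + 3 = 2 ^ a := by
    have : ((m + 3 : ℕ) : ℤ) = ((2 ^ a : ℕ) : ℤ) := by
      push_cast
      rw [← ha]
      simp [gf, eval_finsetSum]
      ring
    exact_mod_cast this
  set S : ℤ[X] := gf (Finset.range (m + 1)) + X ^ r1 + X ^ r2 with hSd
  have hSc : ∀ n, S.coeff n = (if n ≤ m then 1 else 0) + (if n = r1 then 1 else 0)
      + (if n = r2 then 1 else 0) := by
    intro n
    rw [hSd, coeff_add, coeff_add, coeff_gf, coeff_X_pow, coeff_X_pow]
    simp only [Finset.mem_range, Nat.lt_succ_iff]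
  have hS0 : S.coeff 0 = 1 := by
    rw [hSc, if_pos (by omega), if_neg (by omega), if_neg (by omega)]; norm_num
  have hSne : S ≠ 0 := by intro h0; rw [h0] at hS0; simp at hS0
  have hSl : 0 < S.leadingCoeff := by
    apply lt_of_le_of_ne
    · rw [leadingCoeff, hSc]
      split_ifs <;> norm_num
    · exact (leadingCoeff_ne_zero.mpr hSne).symm
  have hdeg : S.natDegree = m := by
    apply natDegree_eq_of_le_of_coeff_ne_zero
    · rw [natDegree_le_iff_coeff_eq_zero]
      intro n hn
      rw [hSc, if_neg (by omega), if_neg (by omega), if_neg (by omega)]; norm_num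
    · rw [hSc, if_pos le_rfl]
      split_ifs <;> norm_num
  have hrev := rev_real S hS0 hSl (norm_root' F F0 S h)
  have hr12 : r1 + r2 = m := by
    have := congrArg (fun p => p.coeff r1) hrev
    simp only [coeff_reverse, hdeg] at this
    rw [revAt_le (by omega), hSc, hSc, if_pos (show m - r1 ≤ m by omega), if_pos (show r1 ≤ m by omega), if_pos (show r1 = r1 from rfl),
      if_neg (show ¬ r1 = r2 by omega)] at this
    have hodd : m % 2 = 1 := by
      have ha0 : a ≠ 0 := by rintro rfl; simp at hma
      obtain ⟨b, rfl⟩ := Nat.exists_eq_succ_of_ne_zero ha0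
      rw [Nat.pow_succ] at hma
      omega
    have hne : ¬ m - r1 = r1 := by omega
    rw [if_neg hne] at this
    by_contra hcon
    rw [if_neg (by omega)] at this
    norm_num at this
  have fr : ∀ n, (n = r1 ∨ n = r2) → F.coeff n = 0 := by
    intro n hn
    have := (hI n).mpr hn
    rw [hFc, if_pos this.1, if_pos this.2]; norm_num
  have fpm : ∀ n, n ≤ m → n ≠ r1 → n ≠ r2 → F.coeff n = 1 ∨ F.coeff n = -1 := by
    intro n hn hn1 hn2
    have x1 := (hU n).mp hn
    have x2 : ¬ (n ∈ c ∧ n ∈ d) := by rw [hI]; omega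
    rw [hFc]
    by_cases hc : n ∈ c <;> by_cases hd : n ∈ d <;> simp_all
  obtain ⟨l, hl, e1, e2, e3⟩ := comb (fun n => F.coeff n) m r1 r2 a hm hma hr12 h3 h5 hrec F0
    (fr r1 (Or.inl rfl)) (fr r2 (Or.inr rfl)) fpm
  have hS0' : gf (c0 l) + gf (d0 l) = S := by
    rw [sum0, ← e1, ← e2, ← e3]
  have hE0 := eq0 l
  rw [hS0'] at hE0
  have hrec0 := rec_of_eq _ m r1 r2 hE0
  have huni := rec_unique _ _ m r1 r2 hr1 h3 hrec hrec0 (F0.trans (zero0 l hl).symm)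
  have hco : ∀ n, ((if n ∈ c then 1 else 0) + (if n ∈ d then 1 else 0) : ℤ)
      = (if n ∈ c0 l then 1 else 0) + (if n ∈ d0 l then 1 else 0) := by
    intro n
    have := congrArg (fun p => p.coeff n) (hS.trans hS0'.symm)
    simpa only [coeff_add, coeff_gf] using this
  have hmem : ∀ n, (n ∈ c ↔ n ∈ c0 l) ∧ (n ∈ d ↔ n ∈ d0 l) := by
    intro n
    have x1 := hco n
    by_cases hn : n ≤ m
    · have x2 := huni n hn
      simp only [hFc, coeff_sub, coeff_gf] at x2
      by_cases y1 : n ∈ c <;> by_cases y2 : n ∈ d <;> by_cases y3 : n ∈ c0 l <;>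
        by_cases y4 : n ∈ d0 l <;> simp only [y1, y2, y3, y4, if_true, if_false] at x1 x2 ⊢ <;>
        first | omega | simp
    · rw [hU] at hn
      have y1 : n ∉ c := fun h => hn (Or.inl h)
      have y2 : n ∉ d := fun h => hn (Or.inr h)
      by_cases y3 : n ∈ c0 l <;>
        by_cases y4 : n ∈ d0 l <;> simp only [y1, y2, y3, y4, if_true, if_false] at x1 ⊢ <;>
        first | omega | simp
  exact ⟨l, hl, e1, e2, e3, Finset.ext fun n => (hmem n).1, Finset.ext fun n => (hmem n).2⟩

end TM

theorem stmt9 (m r1 r2 : ℕ) (hm : 3 ≤ m) (C D : Set ℕ)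
    (h1 : C ∪ D = Set.Icc 0 m) (h2 : C ∩ D = {r1, r2}) (h3 : r1 < r2)
    (h4 : (0 : ℕ) ∈ C) (h5 : Odd r1) :
    (∀ n : ℕ, R C n = R D n) ↔
      ∃ l : ℕ, 0 < l ∧ r1 = 2 ^ (2 * l) - 1 ∧ r2 = 2 ^ (2 * l + 1) + 2 ^ (2 * l) - 2 ∧
        m = 2 ^ (2 * l + 2) - 3 ∧
        C = Al (2 * l) ∪ ((fun x => 2 ^ (2 * l) - 1 + x) '' Bl (2 * l)) ∪
              ((fun x => 2 ^ (2 * l + 1) - 1 + x) ''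
                (Bl (2 * l) ∪ ((fun x => 2 ^ (2 * l) - 1 + x) '' Al (2 * l)))) ∧
        D = Bl (2 * l) ∪ ((fun x => 2 ^ (2 * l) - 1 + x) '' Al (2 * l)) ∪
              ((fun x => 2 ^ (2 * l + 1) - 1 + x) ''
                (Al (2 * l) ∪ ((fun x => 2 ^ (2 * l) - 1 + x) '' Bl (2 * l)))) := by
  constructor
  · intro h
    have hfin : (C ∪ D).Finite := by rw [h1]; exact Set.finite_Icc 0 m
    have hC : C.Finite := hfin.subset Set.subset_union_left
    have hD : D.Finite := hfin.subset Set.subset_union_right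
    lift C to Finset ℕ using hC
    lift D to Finset ℕ using hD
    obtain ⟨l, hl, e1, e2, e3, e4, e5⟩ := TM.fwd m r1 r2 hm C D
      (by
        apply Finset.coe_injective
        rw [Finset.coe_union, h1]
        ext x; simp)
      (by
        apply Finset.coe_injective
        rw [Finset.coe_inter, h2]
        simp) h3 (by simpa using h4) h5 h
    refine ⟨l, hl, e1, e2, e3, ?_, ?_⟩
    · rw [e4, TM.coe_c0]
    · rw [e5, TM.coe_d0]
  · rintro ⟨l, hl, e1, e2, e3, e4, e5⟩
    rw [e4, e5, ← TM.coe_c0, ← TM.coe_d0]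
    exact (TM.R_iff _ _).mpr (TM.eq0 l)
end
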